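/- arXiv:math/0306218 — 2 statements merged into one kernel-verified Lean document; each statement's English description precedes it below -/
import Mathlib

section
/- Assume Q_k = k + O(1). If P = (P_k)_{k≥1} is a sequence of positive reals with φ_j(P,P) = Q_j for all j ≥ 1, and if there exist α > 0 and C ≥ 1 such that C^{-1} k^α ≤ P_k ≤ C k^α for all k ≥ 1, then α = α_θ = 1 + θ/π. -/
open Filter Asymptotics MeasureTheory
open scoped ENNReal Topology

/-- `Theta θ E' E` is the argument of the complex number `E' + E·e^{iθ}`;
for `0 < θ < π` and `E', E > 0` it lies in `(0, θ)` and equals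
`arctan (sin θ / (E'/E + cos θ))` with the branch taken in `(0, θ)`. -/
noncomputable def Theta (θ E' E : ℝ) : ℝ :=
  Complex.arg ((E' : ℂ) + (E : ℂ) * Complex.exp (θ * Complex.I))

/-- `phi θ X Y j = (1/π) · ∑_{k ≥ 1} Θ(X_k, Y_j) ∈ (0, ∞]`, where sequences are
indexed by `ℕ` and only the values at indices `k ≥ 1` are used. -/
noncomputable def phi (θ : ℝ) (X Y : ℕ → ℝ) (j : ℕ) : ℝ≥0∞ :=
  ENNReal.ofReal (1 / Real.pi) * ∑' k : ℕ, ENNReal.ofReal (Theta θ (X (k + 1)) (Y j))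

/-- `Pker θ E E' = E·E' / (E² + 2·cos θ·E·E' + E'²)`. -/
noncomputable def Pker (θ E E' : ℝ) : ℝ :=
  E * E' / (E ^ 2 + 2 * Real.cos θ * E * E' + E' ^ 2)

/-- The drift `D_α = (1/π) ∫_0^∞ Θ(s^α, 1) ds`. -/
noncomputable def Drift (θ α : ℝ) : ℝ :=
  (1 / Real.pi) * ∫ s in Set.Ioi (0 : ℝ), Theta θ (s ^ α) 1

/-- `S_ε = ∫_0^∞ s^{-ε} / (s^{α_θ} + 2 cos θ + s^{-α_θ}) ds` with `α_θ = 1 + θ/π`. -/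
noncomputable def Sfun (θ ε : ℝ) : ℝ :=
  ∫ s in Set.Ioi (0 : ℝ), s ^ (-ε) /
    (s ^ (1 + θ / Real.pi) + 2 * Real.cos θ + s ^ (-(1 + θ / Real.pi)))

/-!
At `θ = π` the function `Theta π E' E` is a step in `E`, so `E ↦ phaseSum π p E` counts the levels
`p j` below `E`. The fixed-point equation says that `phaseSum θ p (p j)` is within `O(1)` of `j`, so
by monotonicity `phaseSum θ p` and `phaseSum π p` differ by `O(min 1 E)` on the positive half-line.

The Mellin transform of `phaseSum θ p` at `-s` is `Z(s) sin (θ s) / (s sin (π s))`, where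
`Z(s) = ∑ p_j ^ (-s)`: the kernel is `Im log (1 + t exp (iθ))`, whose transform follows from that of
`log (1 + t)` by dilation and analytic continuation to `|θ| < π`, and letting `θ → π`, where the
kernel is a step, fixes the constant. Hence `|sin (θ s) - sin (π s)| Z(s)` stays bounded as `s`
decreases to `1 / α`, where `Z` diverges. This forces `sin (θ / α) = sin (π / α)`, that is
`(θ + π) / α = π`.
-/

section Theta

variable {θ E E' c u : ℝ} {z : ℂ}

lemma Theta_mul_mul (hc : 0 < c) : Theta θ (c * E') (c * E) = Theta θ E' E := by
  rw [Theta, Theta, ← Complex.arg_real_mul (E' + E * Complex.exp (θ * Complex.I)) hc]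
  congr 1
  push_cast
  ring

lemma Theta_eq_Theta_one (hE' : 0 < E') : Theta θ E' E = Theta θ 1 (E'⁻¹ * E) := by
  rw [← Theta_mul_mul (inv_pos.2 hE'), inv_mul_cancel₀ hE'.ne']

lemma Theta_eq_im_log :
    Theta θ E' E = (Complex.log (E' + E * Complex.exp (θ * Complex.I))).im := by
  rw [Theta, Complex.log_im]

lemma Theta_nonneg (hθ : θ ∈ Set.Icc 0 Real.pi) (hE : 0 ≤ E) : 0 ≤ Theta θ E' E := by
  rw [Theta, Complex.arg_nonneg_iff]
  simpa [Complex.exp_ofReal_mul_I_im] using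
    mul_nonneg hE (Real.sin_nonneg_of_nonneg_of_le_pi hθ.1 hθ.2)

lemma Theta_pi : Theta Real.pi E' E = if E' < E then Real.pi else 0 := by
  have hreal : (E' : ℂ) + E * Complex.exp (Real.pi * Complex.I) = ((E' - E : ℝ) : ℂ) := by
    rw [Complex.exp_pi_mul_I]
    push_cast
    ring
  rw [Theta, hreal]
  split_ifs with h
  · exact Complex.arg_ofReal_of_neg (sub_neg.2 h)
  · exact Complex.arg_ofReal_of_nonneg (sub_nonneg.2 (not_lt.1 h))

lemma abs_Theta_one_le (hu : 0 ≤ u) : |Theta θ 1 u| ≤ 2 * Real.pi * min 1 u := by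
  have hpi := Real.pi_gt_three
  rcases le_total u (1 / 2) with h | h
  · have hnorm : ‖(u : ℂ) * Complex.exp (θ * Complex.I)‖ = u := by
      rw [norm_mul, Complex.norm_exp_ofReal_mul_I, mul_one, Complex.norm_of_nonneg hu]
    rw [Theta_eq_im_log, Complex.ofReal_one, min_eq_right (by linarith)]
    calc |(Complex.log (1 + u * Complex.exp (θ * Complex.I))).im|
        ≤ ‖Complex.log (1 + u * Complex.exp (θ * Complex.I))‖ := Complex.abs_im_le_norm _
      _ ≤ 3 / 2 * u := by
          simpa only [hnorm] using Complex.norm_log_one_add_half_le_self (hnorm.trans_le h)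
      _ ≤ 2 * Real.pi * u := by nlinarith
  · have hmin : 1 / 2 ≤ min 1 u := le_min (by norm_num) h
    calc |Theta θ 1 u| ≤ Real.pi := Complex.abs_arg_le_pi _
      _ ≤ 2 * Real.pi * min 1 u := by nlinarith

lemma add_mul_mem_slitPlane (hz : z ∈ Complex.slitPlane) (hE' : 0 < E') (hE : 0 ≤ E) :
    (E' : ℂ) + E * z ∈ Complex.slitPlane := by
  rcases hE.eq_or_lt with rfl | hE
  · simpa using hE'
  rw [Complex.mem_slitPlane_iff] at hz ⊢
  simp only [Complex.add_re, Complex.ofReal_re, Complex.re_ofReal_mul, Complex.add_im,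
    Complex.ofReal_im, Complex.im_ofReal_mul, zero_add]
  exact hz.imp (fun h => by positivity) (mul_ne_zero hE.ne')

lemma exp_mul_I_mem_slitPlane (hθ : θ ∈ Set.Ioo (-Real.pi) Real.pi) :
    Complex.exp (θ * Complex.I) ∈ Complex.slitPlane := by
  rw [Complex.mem_slitPlane_iff_arg, Complex.arg_exp_mul_I,
    (toIocMod_eq_self _).2 ⟨hθ.1, by linarith [hθ.2]⟩]
  exact ⟨hθ.2.ne, Complex.exp_ne_zero _⟩

lemma Theta_monotoneOn (hθ : θ ∈ Set.Ico 0 Real.pi) (hE' : 0 < E') :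
    MonotoneOn (Theta θ E') (Set.Ici 0) := by
  set z := Complex.exp (θ * Complex.I) with hz
  have hz_mem : z ∈ Complex.slitPlane :=
    exp_mul_I_mem_slitPlane ⟨by linarith [hθ.1, Real.pi_pos], hθ.2⟩
  have hz_im : 0 ≤ z.im := by
    rw [hz, Complex.exp_ofReal_mul_I_im]
    exact Real.sin_nonneg_of_nonneg_of_le_pi hθ.1 hθ.2.le
  have hderiv (E : ℝ) (hE : 0 ≤ E) : HasDerivAt (Theta θ E') (z / (E' + E * z)).im E := by
    have hlin : HasDerivAt (fun E : ℝ => (E' : ℂ) + E * z) z E := by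
      simpa using ((Complex.ofRealCLM.hasDerivAt (x := E)).mul_const z).const_add (E' : ℂ)
    rw [funext fun E => Theta_eq_im_log (θ := θ) (E' := E') (E := E)]
    exact Complex.imCLM.hasFDerivAt.comp_hasDerivAt E
      (hlin.clog_real (add_mul_mem_slitPlane hz_mem hE' hE))
  refine monotoneOn_of_deriv_nonneg (convex_Ici 0)
    (fun E hE => (hderiv E hE).continuousAt.continuousWithinAt)
    (fun E hE => (hderiv E (interior_subset hE)).differentiableAt.differentiableWithinAt)
    fun E hE => ?_
  have him : (z / (E' + E * z)).im = E' * z.im / Complex.normSq (E' + E * z) := by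
    rw [Complex.div_im]
    simp only [Complex.add_re, Complex.ofReal_re, Complex.re_ofReal_mul, Complex.add_im,
      Complex.ofReal_im, Complex.im_ofReal_mul, zero_add]
    ring
  rw [(hderiv E (interior_subset hE)).deriv, him]
  exact div_nonneg (by positivity) (Complex.normSq_nonneg _)

lemma mul_sin_le_add_mul_Theta (hθ : θ ∈ Set.Icc 0 Real.pi) (hE' : 0 ≤ E') (hE : 0 ≤ E) :
    E * Real.sin θ ≤ (E' + E) * Theta θ E' E := by
  set w := (E' : ℂ) + E * Complex.exp (θ * Complex.I) with hw
  have hw_im : w.im = E * Real.sin θ := by simp [hw, Complex.exp_ofReal_mul_I_im]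
  have hw_norm : ‖w‖ ≤ E' + E := by
    refine (norm_add_le _ _).trans_eq ?_
    rw [norm_mul, Complex.norm_exp_ofReal_mul_I, mul_one, Complex.norm_of_nonneg hE',
      Complex.norm_of_nonneg hE]
  have hTheta : 0 ≤ Theta θ E' E := Theta_nonneg hθ hE
  calc E * Real.sin θ = ‖w‖ * Real.sin (Theta θ E' E) := by
        rw [← hw_im, ← Complex.norm_mul_sin_arg, hw, Theta]
    _ ≤ ‖w‖ * Theta θ E' E := by gcongr; exact Real.sin_le hTheta
    _ ≤ (E' + E) * Theta θ E' E := by gcongr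

lemma tendsto_Theta_pi (hE : 0 ≤ E) (hne : E' ≠ E) :
    Tendsto (fun θ => Theta θ E' E) (𝓝[<] Real.pi) (𝓝 (Theta Real.pi E' E)) := by
  have hcont : Continuous fun θ : ℝ => (E' : ℂ) + E * Complex.exp (θ * Complex.I) := by fun_prop
  have hlim := (hcont.tendsto Real.pi).mono_left (nhdsWithin_le_nhds (s := Set.Iio Real.pi))
  have hvalue : (E' : ℂ) + E * Complex.exp (Real.pi * Complex.I) = ((E' - E : ℝ) : ℂ) := by
    rw [Complex.exp_pi_mul_I]
    push_cast
    ring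
  unfold Theta
  rw [hvalue] at hlim ⊢
  rcases hne.lt_or_gt with h | h
  · have harg := Complex.continuousWithinAt_arg_of_re_neg_of_im_zero (z := ((E' - E : ℝ) : ℂ))
      (by simpa using h) (Complex.ofReal_im _)
    refine harg.tendsto.comp (tendsto_nhdsWithin_of_tendsto_nhds_of_eventually_within _ hlim ?_)
    filter_upwards [Ioo_mem_nhdsLT Real.pi_pos] with θ hθ
    simpa [Complex.exp_ofReal_mul_I_im] using
      mul_nonneg hE (Real.sin_nonneg_of_nonneg_of_le_pi hθ.1.le hθ.2.le)
  · exact (Complex.continuousAt_arg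
      (Complex.ofReal_mem_slitPlane.2 (sub_pos.2 h))).tendsto.comp hlim

lemma measurable_Theta : Measurable (Theta θ E') := by
  unfold Theta
  exact Complex.measurable_arg.comp (by fun_prop)

end Theta

section Mellin

variable {s : ℂ}

lemma norm_ofReal_cpow_sub_one {t : ℝ} (ht : 0 < t) :
    ‖(t : ℂ) ^ (s - 1)‖ = t ^ (s.re - 1) := by
  simp [Complex.norm_cpow_eq_rpow_re_of_pos ht]

section MinBound

variable {σ : ℝ}

lemma eqOn_rpow_mul_min_one_Ioc :
    Set.EqOn (fun t : ℝ => t ^ (-σ)) (fun t => t ^ (-σ - 1) * min 1 t) (Set.Ioc 0 1) := by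
  intro t ht
  simp only [min_eq_right ht.2, ← Real.rpow_add_one ht.1.ne', sub_add_cancel]

lemma eqOn_rpow_mul_min_one_Ioi :
    Set.EqOn (fun t : ℝ => t ^ (-σ - 1)) (fun t => t ^ (-σ - 1) * min 1 t) (Set.Ioi 1) := by
  intro t ht
  simp only [min_eq_left (Set.mem_Ioi.1 ht).le, mul_one]

lemma integrableOn_Ioc_rpow_mul_min_one (hσ : σ < 1) :
    IntegrableOn (fun t : ℝ => t ^ (-σ - 1) * min 1 t) (Set.Ioc 0 1) := by
  refine IntegrableOn.congr_fun ?_ eqOn_rpow_mul_min_one_Ioc measurableSet_Ioc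
  rw [← intervalIntegrable_iff_integrableOn_Ioc_of_le zero_le_one]
  exact intervalIntegral.intervalIntegrable_rpow' (by linarith)

lemma integrableOn_Ioi_one_rpow_mul_min_one (hσ : 0 < σ) :
    IntegrableOn (fun t : ℝ => t ^ (-σ - 1) * min 1 t) (Set.Ioi 1) :=
  (integrableOn_Ioi_rpow_of_lt (by linarith) one_pos).congr_fun
    eqOn_rpow_mul_min_one_Ioi measurableSet_Ioi

lemma integrableOn_Ioi_rpow_mul_min_one (hσ : σ ∈ Set.Ioo 0 1) :
    IntegrableOn (fun t : ℝ => t ^ (-σ - 1) * min 1 t) (Set.Ioi 0) := by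
  rw [← Set.Ioc_union_Ioi_eq_Ioi zero_le_one]
  exact (integrableOn_Ioc_rpow_mul_min_one hσ.2).union (integrableOn_Ioi_one_rpow_mul_min_one hσ.1)

lemma integral_Ioi_rpow_mul_min_one (hσ : σ ∈ Set.Ioo 0 1) :
    ∫ t in Set.Ioi (0 : ℝ), t ^ (-σ - 1) * min 1 t = 1 / (1 - σ) + 1 / σ := by
  rw [← Set.Ioc_union_Ioi_eq_Ioi zero_le_one, setIntegral_union (Set.Ioc_disjoint_Ioi le_rfl)
    measurableSet_Ioi (integrableOn_Ioc_rpow_mul_min_one hσ.2)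
    (integrableOn_Ioi_one_rpow_mul_min_one hσ.1)]
  congr 1
  · rw [← setIntegral_congr_fun measurableSet_Ioc eqOn_rpow_mul_min_one_Ioc,
      ← intervalIntegral.integral_of_le zero_le_one, integral_rpow (Or.inl (by linarith [hσ.2])),
      Real.one_rpow, Real.zero_rpow (by linarith [hσ.2]), sub_zero, neg_add_eq_sub]
  · rw [← setIntegral_congr_fun measurableSet_Ioi eqOn_rpow_mul_min_one_Ioi,
      integral_Ioi_rpow_of_lt (by linarith [hσ.1]) one_pos, Real.one_rpow, sub_add_cancel,
      neg_div_neg_eq]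

end MinBound

section Bounded

variable {F : Type*} [NormedAddCommGroup F] [NormedSpace ℂ F] {f : ℝ → F} {B : ℝ}

lemma norm_cpow_smul_le_of_norm_le_min (hf : ∀ t > 0, ‖f t‖ ≤ B * min 1 t) :
    ∀ᵐ t : ℝ ∂volume.restrict (Set.Ioi 0),
      ‖(t : ℂ) ^ (-s - 1) • f t‖ ≤ B * (t ^ (-s.re - 1) * min 1 t) := by
  filter_upwards [ae_restrict_mem measurableSet_Ioi] with t ht
  rw [norm_smul, norm_ofReal_cpow_sub_one ht, Complex.neg_re, mul_left_comm]
  exact mul_le_mul_of_nonneg_left (hf t ht) (Real.rpow_nonneg (Set.mem_Ioi.1 ht).le _)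

lemma mellinConvergent_neg_of_norm_le_min (hs : s.re ∈ Set.Ioo 0 1)
    (hf_meas : AEStronglyMeasurable f (volume.restrict (Set.Ioi 0)))
    (hf : ∀ t > 0, ‖f t‖ ≤ B * min 1 t) : MellinConvergent f (-s) :=
  ((integrableOn_Ioi_rpow_mul_min_one hs).const_mul B).mono'
    (AEStronglyMeasurable.smul (Measurable.aestronglyMeasurable (by fun_prop)) hf_meas)
    (norm_cpow_smul_le_of_norm_le_min hf)

lemma norm_mellin_neg_le_of_norm_le_min (hs : s.re ∈ Set.Ioo 0 1)
    (hf : ∀ t > 0, ‖f t‖ ≤ B * min 1 t) :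
    ‖mellin f (-s)‖ ≤ B * (1 / (1 - s.re) + 1 / s.re) := by
  rw [← integral_Ioi_rpow_mul_min_one hs, ← integral_const_mul]
  exact norm_integral_le_of_norm_le ((integrableOn_Ioi_rpow_mul_min_one hs).const_mul B)
    (norm_cpow_smul_le_of_norm_le_min hf)

end Bounded

section Dilation

variable {F : Type*} [NormedAddCommGroup F] [NormedSpace ℂ F] {f : ℝ → F}

lemma integral_norm_mellin_comp_mul_left {a : ℝ} (ha : 0 < a) :
    ∫ t in Set.Ioi (0 : ℝ), ‖(t : ℂ) ^ (s - 1) • f (a * t)‖ =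
      a ^ (-s.re) * ∫ t in Set.Ioi (0 : ℝ), ‖(t : ℂ) ^ (s - 1) • f t‖ := by
  have hscale : Set.EqOn (fun t : ℝ => ‖(t : ℂ) ^ (s - 1) • f (a * t)‖)
      (fun t => a ^ (1 - s.re) * ‖((a * t : ℝ) : ℂ) ^ (s - 1) • f (a * t)‖) (Set.Ioi 0) := by
    intro t (ht : 0 < t)
    simp only [norm_smul, norm_ofReal_cpow_sub_one ht, norm_ofReal_cpow_sub_one (mul_pos ha ht)]
    rw [Real.mul_rpow ha.le ht.le, ← mul_assoc, ← mul_assoc, ← Real.rpow_add ha,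
      sub_add_sub_cancel, sub_self, Real.rpow_zero, one_mul]
  rw [setIntegral_congr_fun measurableSet_Ioi hscale, integral_const_mul,
    integral_comp_mul_left_Ioi (fun t : ℝ => ‖(t : ℂ) ^ (s - 1) • f t‖) 0 ha, mul_zero,
    smul_eq_mul, ← mul_assoc, ← Real.rpow_neg_one, ← Real.rpow_add ha]
  congr 2
  ring

lemma hasSum_mellin_comp_mul_left {ι : Type*} [Countable ι] {a : ι → ℝ}
    (hf : MellinConvergent f s) (ha : ∀ i, 0 < a i) (hsum : Summable fun i => a i ^ (-s.re)) :
    HasSum (fun i => (a i : ℂ) ^ (-s) • mellin f s) (mellin (fun t => ∑' i, f (a i * t)) s) := by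
  have hint (i : ι) : IntegrableOn (fun t : ℝ => (t : ℂ) ^ (s - 1) • f (a i * t)) (Set.Ioi 0) :=
    (MellinConvergent.comp_mul_left (ha i)).2 hf
  have h := hasSum_integral_of_summable_integral_norm hint <| by
    simpa only [integral_norm_mellin_comp_mul_left (ha _)] using hsum.mul_right _
  convert h using 1
  · exact funext fun i => (mellin_comp_mul_left f s (ha i)).symm
  · simp only [mellin, tsum_const_smul'']

end Dilation

end Mellin

section LogKernel

variable {s z : ℂ}

lemma one_add_mul_mem_slitPlane (hz : z ∈ Complex.slitPlane) {t : ℝ} (ht : 0 ≤ t) :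
    1 + (t : ℂ) * z ∈ Complex.slitPlane := by
  simpa using add_mul_mem_slitPlane hz one_pos ht

lemma continuousOn_log_one_add_mul (hz : z ∈ Complex.slitPlane) :
    ContinuousOn (fun t : ℝ => Complex.log (1 + t * z)) (Set.Ioi 0) :=
  ContinuousOn.clog (by fun_prop) fun _ ht => one_add_mul_mem_slitPlane hz (le_of_lt ht)

lemma isBigO_log_one_add_mul_zero :
    (fun t : ℝ => Complex.log (1 + t * z)) =O[𝓝[>] 0] fun t => t := by
  have hlin : HasDerivAt (fun t : ℝ => 1 + (t : ℂ) * z) z 0 := by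
    simpa using ((Complex.ofRealCLM.hasDerivAt (x := (0 : ℝ))).mul_const z).const_add 1
  have hlog : HasDerivAt (fun t : ℝ => Complex.log (1 + t * z)) z 0 := by
    simpa using hlin.clog_real (by simp)
  simpa using hlog.isBigO_sub.mono nhdsWithin_le_nhds

lemma isBigO_log_one_add_mul_atTop (hz : z ∈ Complex.slitPlane) {r : ℝ} (hr : 0 < r) :
    (fun t : ℝ => Complex.log (1 + t * z)) =O[atTop] fun t => t ^ r := by
  have hsplit : (fun t : ℝ => Complex.log (1 + t * z)) =ᶠ[atTop]
      fun t : ℝ => (Real.log t : ℂ) + Complex.log ((t : ℂ)⁻¹ + z) := by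
    filter_upwards [eventually_gt_atTop 0] with t ht
    have hfactor : 1 + (t : ℂ) * z = t * ((t : ℂ)⁻¹ + z) := by
      rw [mul_add, mul_inv_cancel₀ (Complex.ofReal_ne_zero.2 ht.ne')]
    have hne := Complex.slitPlane_ne_zero (one_add_mul_mem_slitPlane hz ht.le)
    rw [hfactor] at hne ⊢
    exact Complex.log_ofReal_mul ht (right_ne_zero_of_mul hne)
  have hlog : (fun t : ℝ => (Real.log t : ℂ)) =O[atTop] fun t => t ^ r :=
    Complex.isBigO_ofReal_left.2 (isLittleO_log_rpow_atTop hr).isBigO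
  have hlim : Tendsto (fun t : ℝ => Complex.log ((t : ℂ)⁻¹ + z)) atTop (𝓝 (Complex.log z)) := by
    refine Tendsto.clog ?_ hz
    simpa using ((Complex.continuous_ofReal.tendsto 0).comp tendsto_inv_atTop_zero).add_const z
  have hone : (fun _ : ℝ => (1 : ℝ)) =O[atTop] fun t : ℝ => t ^ r :=
    ((isLittleO_const_left.2 (Or.inr (tendsto_norm_atTop_atTop.comp
      (tendsto_rpow_atTop hr))))).isBigO
  exact hsplit.trans_isBigO (hlog.add ((hlim.isBigO_one ℝ).trans hone))

lemma mellinConvergent_log_one_add_mul (hs : s.re ∈ Set.Ioo 0 1) (hz : z ∈ Complex.slitPlane) :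
    MellinConvergent (fun t : ℝ => Complex.log (1 + t * z)) (-s) := by
  refine mellinConvergent_of_isBigO_rpow (a := -(s.re / 2)) (b := -1)
    ((continuousOn_log_one_add_mul hz).locallyIntegrableOn measurableSet_Ioi) ?_ ?_ ?_ ?_
  · simpa only [neg_neg] using isBigO_log_one_add_mul_atTop hz (half_pos hs.1)
  · rw [Complex.neg_re]
    linarith [hs.1]
  · simpa using isBigO_log_one_add_mul_zero
  · rw [Complex.neg_re]
    linarith [hs.2]

lemma exists_mul_one_add_le_norm_one_add_mul {K : Set ℂ} (hK : IsCompact K)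
    (hK_slit : K ⊆ Complex.slitPlane) :
    ∃ δ > 0, ∀ z ∈ K, ∀ t : ℝ, 0 ≤ t → δ * (1 + t) ≤ ‖1 + (t : ℂ) * z‖ := by
  obtain ⟨δ, hδ, hmin⟩ := (isCompact_Icc (a := (0 : ℝ)) (b := 1)).prod hK
    |>.exists_forall_le' (a := 0) (f := fun p : ℝ × ℂ => ‖((1 - p.1 : ℝ) : ℂ) + p.1 * p.2‖)
    (by fun_prop) <| by
      rintro ⟨r, z⟩ ⟨hr, hz⟩
      refine norm_pos_iff.2 (Complex.slitPlane_ne_zero ?_)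
      simpa using Complex.starConvex_one_slitPlane (hK_slit hz) (sub_nonneg.2 hr.2) hr.1
        (sub_add_cancel 1 r)
  refine ⟨δ, hδ, fun z hz t ht => ?_⟩
  have ht1 : 0 < 1 + t := by linarith
  have hfactor : 1 + (t : ℂ) * z =
      (1 + t : ℝ) * (((1 - t / (1 + t) : ℝ) : ℂ) + (t / (1 + t) : ℝ) * z) := by
    have : (1 : ℂ) + t ≠ 0 := mod_cast ht1.ne'
    push_cast
    field_simp
    ring
  rw [hfactor, norm_mul, Complex.norm_of_nonneg ht1.le, mul_comm]
  gcongr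
  exact hmin (t / (1 + t), z) ⟨⟨by positivity, (div_le_one ht1).2 (by linarith)⟩, hz⟩

lemma exists_norm_div_one_add_mul_le {K : Set ℂ} (hK : IsCompact K)
    (hK_slit : K ⊆ Complex.slitPlane) :
    ∃ B, ∀ z ∈ K, ∀ t : ℝ, 0 < t → ‖(t : ℂ) / (1 + t * z)‖ ≤ B * min 1 t := by
  obtain ⟨δ, hδ, hlower⟩ := exists_mul_one_add_le_norm_one_add_mul hK hK_slit
  refine ⟨δ⁻¹, fun z hz t ht => ?_⟩
  rw [norm_div, Complex.norm_of_nonneg ht.le]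
  calc t / ‖1 + (t : ℂ) * z‖ ≤ t / (δ * (1 + t)) := by gcongr; exact hlower z hz t ht.le
    _ = δ⁻¹ * (t / (1 + t)) := by field_simp
    _ ≤ δ⁻¹ * min 1 t := by
      gcongr
      exact le_min ((div_le_one (by linarith)).2 (by linarith)) (div_le_self ht.le (by linarith))

lemma differentiableOn_mellin_log_one_add_mul (hs : s.re ∈ Set.Ioo 0 1) :
    DifferentiableOn ℂ (fun z => mellin (fun t : ℝ => Complex.log (1 + t * z)) (-s))
      Complex.slitPlane := by
  intro z₀ hz₀
  obtain ⟨K, hK_nhds, hK_slit, hK⟩ := local_compact_nhds (Complex.isOpen_slitPlane.mem_nhds hz₀)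
  obtain ⟨B, hB⟩ := exists_norm_div_one_add_mul_le hK hK_slit
  refine (hasDerivAt_integral_of_dominated_loc_of_deriv_le
    (F := fun z (t : ℝ) => (t : ℂ) ^ (-s - 1) • Complex.log (1 + t * z))
    (F' := fun z (t : ℝ) => (t : ℂ) ^ (-s - 1) • ((t : ℂ) / (1 + t * z)))
    (bound := fun t => B * (t ^ (-s.re - 1) * min 1 t)) hK_nhds ?_
    (mellinConvergent_log_one_add_mul hs hz₀) ?_ ?_
    ((integrableOn_Ioi_rpow_mul_min_one hs).const_mul B) ?_).2.differentiableAt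
    |>.differentiableWithinAt
  · filter_upwards [hK_nhds] with z hz
    exact (mellinConvergent_log_one_add_mul hs (hK_slit hz)).aestronglyMeasurable
  · exact Measurable.aestronglyMeasurable (by fun_prop)
  · filter_upwards [ae_restrict_mem measurableSet_Ioi] with t (ht : 0 < t) z hz
    rw [norm_smul, norm_ofReal_cpow_sub_one ht, Complex.neg_re, mul_left_comm]
    exact mul_le_mul_of_nonneg_left (hB z hz t ht) (Real.rpow_nonneg ht.le _)
  · filter_upwards [ae_restrict_mem measurableSet_Ioi] with t (ht : 0 < t) z hz
    have hlin : HasDerivAt (fun z : ℂ => 1 + (t : ℂ) * z) t z := by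
      simpa using ((hasDerivAt_id z).const_mul (t : ℂ)).const_add 1
    exact (hlin.clog (one_add_mul_mem_slitPlane (hK_slit hz) ht.le)).const_mul _

-- Positive `z` are dilations of `z = 1`; the slit plane follows by analytic continuation.
lemma mellin_log_one_add_mul (hs : s.re ∈ Set.Ioo 0 1) (hz : z ∈ Complex.slitPlane) :
    mellin (fun t : ℝ => Complex.log (1 + t * z)) (-s) =
      z ^ s * mellin (fun t : ℝ => Complex.log (1 + t)) (-s) := by
  have hpos (r : ℝ) (hr : 0 < r) : mellin (fun t : ℝ => Complex.log (1 + t * r)) (-s) =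
      (r : ℂ) ^ s * mellin (fun t : ℝ => Complex.log (1 + t)) (-s) := by
    simpa [mul_comm] using mellin_comp_mul_left (fun t : ℝ => Complex.log (1 + t)) (-s) hr
  have hleft := (differentiableOn_mellin_log_one_add_mul hs).analyticOnNhd
    Complex.isOpen_slitPlane
  have hright : AnalyticOnNhd ℂ
      (fun z => z ^ s * mellin (fun t : ℝ => Complex.log (1 + t)) (-s)) Complex.slitPlane :=
    fun w hw => (analyticAt_id.cpow analyticAt_const hw).mul analyticAt_const
  have hconn : IsPreconnected Complex.slitPlane :=
    (Complex.starConvex_one_slitPlane.isPathConnected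
      Complex.one_mem_slitPlane).isConnected.isPreconnected
  refine hleft.eqOn_of_preconnected_of_frequently_eq hright hconn Complex.one_mem_slitPlane ?_ hz
  have hreal : Tendsto ((↑) : ℝ → ℂ) (𝓝[>] 1) (𝓝[≠] 1) := by
    rw [← Complex.ofReal_one]
    exact Complex.continuous_ofReal.continuousWithinAt.tendsto_nhdsWithin
      fun r (hr : 1 < r) => Complex.ofReal_injective.ne hr.ne'
  refine hreal.frequently (Eventually.frequently ?_)
  filter_upwards [self_mem_nhdsWithin] with r hr using hpos r (one_pos.trans hr)

end LogKernel

section MellinTheta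

variable {θ : ℝ} {s : ℂ}

lemma norm_Theta_one_le {t : ℝ} (ht : 0 < t) :
    ‖(Theta θ 1 t : ℂ)‖ ≤ 2 * Real.pi * min 1 t := by
  rw [Complex.norm_real]
  exact abs_Theta_one_le ht.le

lemma mellinConvergent_Theta_one (hs : s.re ∈ Set.Ioo 0 1) :
    MellinConvergent (fun t => (Theta θ 1 t : ℂ)) (-s) :=
  mellinConvergent_neg_of_norm_le_min hs
    (Complex.measurable_ofReal.comp measurable_Theta).aestronglyMeasurable
    fun _ ht => norm_Theta_one_le ht

lemma Theta_one_eq_log_sub_log (hθ : θ ∈ Set.Ioo (-Real.pi) Real.pi) {t : ℝ} (ht : 0 ≤ t) :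
    (Theta θ 1 t : ℂ) = (Complex.log (1 + t * Complex.exp (θ * Complex.I)) -
      Complex.log (1 + t * Complex.exp ((-θ : ℝ) * Complex.I))) / (2 * Complex.I) := by
  set w := 1 + (t : ℂ) * Complex.exp (θ * Complex.I) with hw
  have hconj : 1 + (t : ℂ) * Complex.exp ((-θ : ℝ) * Complex.I) = (starRingEnd ℂ) w := by
    simp [hw, ← Complex.exp_conj]
  have hw_arg : w.arg ≠ Real.pi :=
    Complex.slitPlane_arg_ne_pi (one_add_mul_mem_slitPlane (exp_mul_I_mem_slitPlane hθ) ht)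
  rw [Theta_eq_im_log, Complex.ofReal_one, ← hw, hconj, Complex.log_conj _ hw_arg,
    Complex.sub_conj]
  field_simp
  push_cast
  ring

lemma exp_mul_I_cpow (hθ : θ ∈ Set.Ioo (-Real.pi) Real.pi) :
    Complex.exp (θ * Complex.I) ^ s = Complex.exp (θ * s * Complex.I) := by
  rw [Complex.cpow_def_of_ne_zero (Complex.exp_ne_zero _),
    Complex.log_exp (by simpa using hθ.1) (by simpa using hθ.2.le), mul_right_comm]

lemma mellin_Theta_one_eq_sin_mul (hs : s.re ∈ Set.Ioo 0 1)
    (hθ : θ ∈ Set.Ioo (-Real.pi) Real.pi) :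
    mellin (fun t => (Theta θ 1 t : ℂ)) (-s) =
      Complex.sin (θ * s) * mellin (fun t : ℝ => Complex.log (1 + t)) (-s) := by
  have hθ' : -θ ∈ Set.Ioo (-Real.pi) Real.pi := ⟨neg_lt_neg hθ.2, neg_lt.1 hθ.1⟩
  have hz := exp_mul_I_mem_slitPlane hθ
  have hz' := exp_mul_I_mem_slitPlane hθ'
  have hsub := (hasMellin_sub (mellinConvergent_log_one_add_mul hs hz)
    (mellinConvergent_log_one_add_mul hs hz')).2
  calc mellin (fun t => (Theta θ 1 t : ℂ)) (-s)
      = mellin (fun t : ℝ => (Complex.log (1 + t * Complex.exp (θ * Complex.I)) -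
          Complex.log (1 + t * Complex.exp ((-θ : ℝ) * Complex.I))) / (2 * Complex.I)) (-s) :=
        setIntegral_congr_fun measurableSet_Ioi fun t ht => by
          simp only [Theta_one_eq_log_sub_log hθ (le_of_lt ht)]
    _ = (Complex.exp (θ * s * Complex.I) - Complex.exp ((-θ : ℝ) * s * Complex.I)) *
          mellin (fun t : ℝ => Complex.log (1 + t)) (-s) / (2 * Complex.I) := by
        rw [mellin_div_const, hsub, mellin_log_one_add_mul hs hz, mellin_log_one_add_mul hs hz',
          exp_mul_I_cpow hθ, exp_mul_I_cpow hθ', sub_mul]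
    _ = Complex.sin (θ * s) * mellin (fun t : ℝ => Complex.log (1 + t)) (-s) := by
        rw [Complex.sin]
        field_simp
        push_cast
        rw [Complex.I_sq]
        ring_nf

lemma mellin_Theta_pi_one (hs : 0 < s.re) :
    mellin (fun t => (Theta Real.pi 1 t : ℂ)) (-s) = Real.pi / s := by
  have hindicator (t : ℝ) : (t : ℂ) ^ (-s - 1) • (Theta Real.pi 1 t : ℂ) =
      (Set.Ioi 1).indicator (fun t : ℝ => (t : ℂ) ^ (-s - 1) * Real.pi) t := by
    by_cases ht : 1 < t <;> simp [Theta_pi, ht]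
  have hre : (-s - 1).re < -1 := by
    rw [Complex.sub_re, Complex.neg_re, Complex.one_re]
    linarith
  simp only [mellin, hindicator]
  rw [setIntegral_indicator measurableSet_Ioi,
    Set.inter_eq_right.2 (Set.Ioi_subset_Ioi zero_le_one), integral_mul_const,
    integral_Ioi_cpow_of_lt hre one_pos]
  simp [div_eq_inv_mul]

lemma tendsto_mellin_Theta_one_pi (hs : s.re ∈ Set.Ioo 0 1) :
    Tendsto (fun θ => mellin (fun t => (Theta θ 1 t : ℂ)) (-s)) (𝓝[<] Real.pi)
      (𝓝 (mellin (fun t => (Theta Real.pi 1 t : ℂ)) (-s))) := by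
  refine tendsto_integral_filter_of_dominated_convergence _
    (.of_forall fun θ => (mellinConvergent_Theta_one hs).aestronglyMeasurable)
    (.of_forall fun θ => norm_cpow_smul_le_of_norm_le_min fun t ht => norm_Theta_one_le ht)
    ((integrableOn_Ioi_rpow_mul_min_one hs).const_mul _) ?_
  filter_upwards [ae_restrict_mem measurableSet_Ioi, ae_restrict_of_ae (Measure.ae_ne volume 1)]
    with t (ht : 0 < t) ht1
  exact ((Complex.continuous_ofReal.tendsto _).comp
    (tendsto_Theta_pi ht.le ht1.symm)).const_smul _

lemma sin_pi_mul_mul_mellin_log_one_add (hs : s.re ∈ Set.Ioo 0 1) :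
    Complex.sin (Real.pi * s) * mellin (fun t : ℝ => Complex.log (1 + t)) (-s) =
      Real.pi / s := by
  rw [← mellin_Theta_pi_one hs.1]
  refine tendsto_nhds_unique ?_ (tendsto_mellin_Theta_one_pi hs)
  have hcont : Continuous fun θ : ℝ =>
      Complex.sin (θ * s) * mellin (fun t : ℝ => Complex.log (1 + t)) (-s) := by fun_prop
  refine ((hcont.tendsto Real.pi).mono_left nhdsWithin_le_nhds).congr' ?_
  filter_upwards [Ioo_mem_nhdsLT (neg_lt_self Real.pi_pos)] with θ hθ
  exact (mellin_Theta_one_eq_sin_mul hs hθ).symm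

lemma mellin_Theta_one (hs : s.re ∈ Set.Ioo 0 1) (hθ : θ ∈ Set.Ioc (-Real.pi) Real.pi) :
    mellin (fun t => (Theta θ 1 t : ℂ)) (-s) =
      Real.pi * Complex.sin (θ * s) / (s * Complex.sin (Real.pi * s)) := by
  have hs0 : s ≠ 0 := fun h => by simp [h] at hs
  have hlog := sin_pi_mul_mul_mellin_log_one_add hs
  have hsin : Complex.sin (Real.pi * s) ≠ 0 := by
    refine left_ne_zero_of_mul (hlog.trans_ne (div_ne_zero ?_ hs0))
    exact Complex.ofReal_ne_zero.2 Real.pi_ne_zero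
  rcases hθ.2.eq_or_lt with rfl | hθπ
  · rw [mellin_Theta_pi_one hs.1, mul_div_mul_right _ _ hsin]
  · rw [mellin_Theta_one_eq_sin_mul hs ⟨hθ.1, hθπ⟩, eq_div_iff (mul_ne_zero hs0 hsin)]
    rw [eq_div_iff hs0] at hlog
    linear_combination Complex.sin (θ * s) * hlog

end MellinTheta

/-- The real-valued form of `phi`, with a continuous energy variable `E` and levels `p`. At `θ = π`
it is the counting function of the levels below `E`; see `phaseSum_pi`. -/
noncomputable def phaseSum {ι : Type*} (θ : ℝ) (p : ι → ℝ) (E : ℝ) : ℝ :=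
  1 / Real.pi * ∑' i, Theta θ (p i) E

section PhaseSum

variable {ι : Type*} {θ θ' E : ℝ} {p : ι → ℝ}

lemma phaseSum_pi : phaseSum Real.pi p E = {i | p i < E}.ncard := by
  have hsum : ∑' i, Theta Real.pi (p i) E = ∑' _ : {i | p i < E}, Real.pi := by
    rw [tsum_subtype {i | p i < E} fun _ => Real.pi]
    exact tsum_congr fun i => by simp [Theta_pi, Set.indicator_apply]
  rw [phaseSum, hsum, tsum_const, Nat.card_coe_set_eq, nsmul_eq_mul, mul_left_comm,
    one_div_mul_cancel Real.pi_ne_zero, mul_one]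

lemma phaseSum_nonneg (hθ : θ ∈ Set.Icc 0 Real.pi) (hE : 0 ≤ E) : 0 ≤ phaseSum θ p E :=
  mul_nonneg (by positivity) (tsum_nonneg fun _ => Theta_nonneg hθ hE)

lemma abs_Theta_le (hE : 0 ≤ E) {E' : ℝ} (hE' : 0 < E') :
    |Theta θ E' E| ≤ 2 * Real.pi * E * E'⁻¹ := by
  rw [Theta_eq_Theta_one hE']
  calc |Theta θ 1 (E'⁻¹ * E)| ≤ 2 * Real.pi * min 1 (E'⁻¹ * E) := abs_Theta_one_le (by positivity)
    _ ≤ 2 * Real.pi * (E'⁻¹ * E) := by gcongr; exact min_le_right _ _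
    _ = 2 * Real.pi * E * E'⁻¹ := by ring

variable (hp : ∀ i, 0 < p i) (hsum : Summable fun i => (p i)⁻¹)
include hp hsum

lemma summable_Theta (hE : 0 ≤ E) : Summable fun i => Theta θ (p i) E :=
  (hsum.mul_left _).of_norm_bounded fun i => abs_Theta_le hE (hp i)

lemma abs_phaseSum_le (hE : 0 ≤ E) : |phaseSum θ p E| ≤ 2 * E * ∑' i, (p i)⁻¹ := by
  rw [phaseSum, abs_mul, abs_of_pos (by positivity), one_div, inv_mul_le_iff₀ Real.pi_pos]
  calc |∑' i, Theta θ (p i) E| ≤ ∑' i, 2 * Real.pi * E * (p i)⁻¹ :=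
        tsum_of_norm_bounded (f := fun i => Theta θ (p i) E) (hsum.mul_left _).hasSum
          fun i => abs_Theta_le hE (hp i)
    _ = Real.pi * (2 * E * ∑' i, (p i)⁻¹) := by rw [tsum_mul_left]; ring

lemma phaseSum_monotoneOn (hθ : θ ∈ Set.Ico 0 Real.pi) :
    MonotoneOn (phaseSum θ p) (Set.Ici 0) := by
  intro E hE E₁ hE₁ hle
  exact mul_le_mul_of_nonneg_left (Summable.tsum_le_tsum
    (fun i => Theta_monotoneOn hθ (hp i) hE hE₁ hle) (summable_Theta hp hsum hE)
    (summable_Theta hp hsum hE₁)) (by positivity)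

lemma phaseSum_sub_phaseSum (hE : 0 ≤ E) :
    phaseSum θ p E - phaseSum θ' p E =
      1 / Real.pi * ∑' i, (Theta θ 1 ((p i)⁻¹ * E) - Theta θ' 1 ((p i)⁻¹ * E)) := by
  simp only [← Theta_eq_Theta_one (hp _), phaseSum,
    (summable_Theta hp hsum hE).tsum_sub (summable_Theta hp hsum hE), mul_sub]

lemma mellin_phaseSum_sub [Countable ι] {s : ℂ} (hs : s.re ∈ Set.Ioo 0 1)
    (hsum_s : Summable fun i => p i ^ (-s.re)) (hθ : θ ∈ Set.Ioc (-Real.pi) Real.pi)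
    (hθ' : θ' ∈ Set.Ioc (-Real.pi) Real.pi) :
    mellin (fun E => ((phaseSum θ p E - phaseSum θ' p E : ℝ) : ℂ)) (-s) =
      (Complex.sin (θ * s) - Complex.sin (θ' * s)) / (s * Complex.sin (Real.pi * s)) *
        ∑' i, (p i : ℂ) ^ (-s) := by
  have hpi : (Real.pi : ℂ) ≠ 0 := Complex.ofReal_ne_zero.2 Real.pi_ne_zero
  have hker := hasMellin_sub (mellinConvergent_Theta_one hs (θ := θ))
    (mellinConvergent_Theta_one hs (θ := θ'))
  have hdilation := hasSum_mellin_comp_mul_left hker.1 (a := fun i => (p i)⁻¹)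
    (fun i => inv_pos.2 (hp i)) <| by
      simpa [Real.inv_rpow (hp _).le, Real.rpow_neg (hp _).le] using hsum_s
  have hinv (i : ι) : (((p i)⁻¹ : ℝ) : ℂ) ^ (- -s) = (p i : ℂ) ^ (-s) := by
    rw [neg_neg, Complex.cpow_neg, Complex.ofReal_inv, Complex.inv_cpow]
    rw [Complex.arg_ofReal_of_nonneg (hp i).le]
    exact Real.pi_ne_zero.symm
  calc mellin (fun E => ((phaseSum θ p E - phaseSum θ' p E : ℝ) : ℂ)) (-s)
      = mellin (fun E => (1 / Real.pi : ℂ) • ∑' i, ((Theta θ 1 ((p i)⁻¹ * E) : ℂ) -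
          Theta θ' 1 ((p i)⁻¹ * E))) (-s) :=
        setIntegral_congr_fun measurableSet_Ioi fun E hE => by
          simp only [phaseSum_sub_phaseSum hp hsum (le_of_lt hE)]
          push_cast
          rfl
    _ = (1 / Real.pi : ℂ) * ((∑' i, (p i : ℂ) ^ (-s)) *
          (mellin (fun t => (Theta θ 1 t : ℂ)) (-s) -
            mellin (fun t => (Theta θ' 1 t : ℂ)) (-s))) := by
        rw [mellin_const_smul, ← hdilation.tsum_eq, smul_eq_mul, ← hker.2]
        simp only [hinv, smul_eq_mul, tsum_mul_right]
    _ = _ := by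
        rw [mellin_Theta_one hs hθ, mellin_Theta_one hs hθ']
        field_simp

lemma abs_sin_sub_sin_mul_tsum_rpow_le [Countable ι] {B σ : ℝ} (hσ : σ ∈ Set.Ioo 0 1)
    (hsum_σ : Summable fun i => p i ^ (-σ)) (hθ : θ ∈ Set.Ioc (-Real.pi) Real.pi)
    (hB : ∀ E > 0, |phaseSum θ p E - phaseSum Real.pi p E| ≤ B * min 1 E) :
    |Real.sin (θ * σ) - Real.sin (Real.pi * σ)| * ∑' i, p i ^ (-σ) ≤
      B * Real.sin (Real.pi * σ) / (1 - σ) := by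
  have hsin : 0 < Real.sin (Real.pi * σ) :=
    Real.sin_pos_of_pos_of_lt_pi (mul_pos Real.pi_pos hσ.1)
      (mul_lt_of_lt_one_right Real.pi_pos hσ.2)
  have htransform : mellin (fun E => ((phaseSum θ p E - phaseSum Real.pi p E : ℝ) : ℂ)) (-σ) =
      (((Real.sin (θ * σ) - Real.sin (Real.pi * σ)) / (σ * Real.sin (Real.pi * σ)) *
        ∑' i, p i ^ (-σ) : ℝ) : ℂ) := by
    rw [mellin_phaseSum_sub hp hsum (by simpa using hσ) (by simpa using hsum_σ) hθ
      ⟨by linarith [Real.pi_pos], le_rfl⟩]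
    push_cast [Complex.ofReal_cpow (hp _).le]
    rfl
  have hbound := norm_mellin_neg_le_of_norm_le_min (s := σ)
    (f := fun E => ((phaseSum θ p E - phaseSum Real.pi p E : ℝ) : ℂ)) (by simpa using hσ)
    fun E hE => (Complex.norm_real _).trans_le (hB E hE)
  have hZ : 0 ≤ ∑' i, p i ^ (-σ) := tsum_nonneg fun i => Real.rpow_nonneg (hp i).le _
  have hden : 0 < σ * Real.sin (Real.pi * σ) := mul_pos hσ.1 hsin
  rw [htransform, Complex.norm_real, Real.norm_eq_abs, abs_mul, abs_div, abs_of_pos hden,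
    abs_of_nonneg hZ, div_mul_eq_mul_div, div_le_iff₀ hden, Complex.ofReal_re] at hbound
  refine hbound.trans_eq ?_
  have hσ0 := hσ.1.ne'
  have hσ1 : 1 - σ ≠ 0 := by linarith [hσ.2]
  field_simp
  ring

end PhaseSum

section Counting

variable {θ E K : ℝ} {p : ℕ → ℝ}

lemma abs_phaseSum_sub_phaseSum_pi_le (hp : ∀ j, 0 < p j) (hsum : Summable fun j => (p j)⁻¹)
    (hθ : θ ∈ Set.Ico 0 Real.pi) (hK : ∀ j, |phaseSum θ p (p j) - j| ≤ K) (hE : 0 ≤ E) :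
    |phaseSum θ p E - phaseSum Real.pi p E| ≤ K + 1 := by
  have hmono := phaseSum_monotoneOn hp hsum hθ
  have hK0 : 0 ≤ K := (abs_nonneg _).trans (hK 0)
  have hnonneg : 0 ≤ phaseSum θ p E := phaseSum_nonneg ⟨hθ.1, hθ.2.le⟩ hE
  set f := phaseSum θ p E
  have hbelow : {j | p j < E} ⊆ Set.Iic ⌊f + K⌋₊ := fun j (hj : p j < E) =>
    Nat.le_floor (by linarith [(abs_le.1 (hK j)).1, hmono (hp j).le hE hj.le])
  have habove : Set.Iio ⌈f - K⌉₊ ⊆ {j | p j < E} := fun j hj => by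
    by_contra hj'
    have := Nat.lt_ceil.1 (Set.mem_Iio.1 hj)
    linarith [(abs_le.1 (hK j)).2, hmono hE (hp j).le (not_lt.1 hj')]
  have hupper := Set.ncard_le_ncard hbelow (Set.finite_Iic _)
  have hlower := Set.ncard_le_ncard habove ((Set.finite_Iic _).subset hbelow)
  rw [Set.ncard_Iic_nat, ← Nat.cast_le (α := ℝ)] at hupper
  rw [Set.ncard_Iio_nat, ← Nat.cast_le (α := ℝ)] at hlower
  push_cast at hupper
  rw [phaseSum_pi, abs_le]
  constructor <;> linarith [Nat.floor_le (add_nonneg hnonneg hK0), Nat.le_ceil (f - K)]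

lemma abs_phaseSum_sub_phaseSum_pi_le_mul_min (hp : ∀ j, 0 < p j)
    (hsum : Summable fun j => (p j)⁻¹) (hθ : θ ∈ Set.Ico 0 Real.pi)
    (hK : ∀ j, |phaseSum θ p (p j) - j| ≤ K) (hE : 0 < E) :
    |phaseSum θ p E - phaseSum Real.pi p E| ≤ (4 * ∑' j, (p j)⁻¹ + (K + 1)) * min 1 E := by
  have hK0 : 0 ≤ K := (abs_nonneg _).trans (hK 0)
  have hS : 0 ≤ ∑' j, (p j)⁻¹ := tsum_nonneg fun j => (inv_pos.2 (hp j)).le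
  rcases le_total E 1 with h | h
  · rw [min_eq_right h]
    have := abs_phaseSum_le hp hsum hE.le (θ := θ)
    have := abs_phaseSum_le hp hsum hE.le (θ := Real.pi)
    nlinarith [abs_sub (phaseSum θ p E) (phaseSum Real.pi p E)]
  · rw [min_eq_left h]
    linarith [abs_phaseSum_sub_phaseSum_pi_le hp hsum hθ hK hE.le]

end Counting

section Exponent

variable {ι : Type*} {p : ι → ℝ} {θ ρ : ℝ}

lemma summable_inv_of_summable_Theta (hθ : θ ∈ Set.Ioo 0 Real.pi) {E : ℝ} (hE : 0 < E)
    (hp : ∀ i, 0 < p i) (hlim : Tendsto p cofinite atTop)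
    (hsum : Summable fun i => Theta θ (p i) E) : Summable fun i => (p i)⁻¹ := by
  have hsin := Real.sin_pos_of_pos_of_lt_pi hθ.1 hθ.2
  refine (hsum.mul_left (2 / (E * Real.sin θ))).of_norm_bounded_eventually ?_
  filter_upwards [hlim.eventually_ge_atTop E] with i hi
  have hTheta := mul_sin_le_add_mul_Theta ⟨hθ.1.le, hθ.2.le⟩ (hp i).le hE.le
  have hTheta_nonneg : 0 ≤ Theta θ (p i) E := Theta_nonneg ⟨hθ.1.le, hθ.2.le⟩ hE.le
  rw [Real.norm_of_nonneg (inv_pos.2 (hp i)).le, div_mul_eq_mul_div, le_div_iff₀ (by positivity),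
    inv_mul_le_iff₀ (hp i)]
  nlinarith

lemma tendsto_atTop_of_summable_rpow_neg {σ : ℝ} (hσ : 0 < σ) (hp : ∀ i, 0 < p i)
    (hsum : Summable fun i => p i ^ (-σ)) : Tendsto p cofinite atTop := by
  have hzero : Tendsto (fun i => p i ^ (-σ)) cofinite (𝓝[>] 0) :=
    tendsto_nhdsWithin_iff.2
      ⟨hsum.tendsto_cofinite_zero, .of_forall fun i => Real.rpow_pos_of_pos (hp i) _⟩
  refine ((tendsto_rpow_neg_nhdsGT_zero (neg_lt_zero.2 (inv_pos.2 hσ))).comp hzero).congr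
    fun i => ?_
  simp only [Function.comp_apply, ← Real.rpow_mul (hp i).le, neg_mul_neg, mul_inv_cancel₀ hσ.ne',
    Real.rpow_one]

lemma summable_rpow_neg_mono {σ τ : ℝ} (hστ : σ ≤ τ) (hp : ∀ i, 0 < p i)
    (hlim : Tendsto p cofinite atTop) (hsum : Summable fun i => p i ^ (-σ)) :
    Summable fun i => p i ^ (-τ) := by
  refine hsum.of_norm_bounded_eventually ?_
  filter_upwards [hlim.eventually_ge_atTop 1] with i hi
  rw [Real.norm_of_nonneg (Real.rpow_nonneg (hp i).le _)]
  exact Real.rpow_le_rpow_of_exponent_le hi (neg_le_neg hστ)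

lemma eq_zero_of_abs_mul_tsum_rpow_le {f g : ℝ → ℝ} (hf : ContinuousAt f ρ)
    (hg : ContinuousAt g ρ) (hp : ∀ i, 0 < p i) (hsum : ∀ s > ρ, Summable fun i => p i ^ (-s))
    (hnsum : ¬ Summable fun i => p i ^ (-ρ))
    (hle : ∀ᶠ s in 𝓝[>] ρ, |f s| * ∑' i, p i ^ (-s) ≤ g s) : f ρ = 0 := by
  by_contra hne
  refine hnsum (summable_of_sum_le (fun i => Real.rpow_nonneg (hp i).le _) (c := g ρ / |f ρ|) ?_)
  intro t
  rw [le_div_iff₀' (abs_pos.2 hne)]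
  have hcont : ContinuousAt (fun s => |f s| * ∑ i ∈ t, p i ^ (-s)) ρ :=
    hf.abs.mul (tendsto_finsetSum _ fun i _ =>
      (Real.continuous_const_rpow (hp i).ne').continuousAt.comp continuousAt_neg)
  refine le_of_tendsto_of_tendsto (b := 𝓝[>] ρ) (hcont.tendsto.mono_left nhdsWithin_le_nhds)
    (hg.tendsto.mono_left nhdsWithin_le_nhds) ?_
  filter_upwards [hle, self_mem_nhdsWithin] with s hs hρs
  refine le_trans (mul_le_mul_of_nonneg_left ?_ (abs_nonneg _)) hs
  exact (hsum s hρs).sum_le_tsum t fun i _ => Real.rpow_nonneg (hp i).le _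

lemma add_mul_eq_pi_of_sin_mul_eq_sin_mul {θ ρ : ℝ} (hθ : θ ∈ Set.Ioo 0 Real.pi)
    (hρ : ρ ∈ Set.Ioo 0 1) (h : Real.sin (θ * ρ) = Real.sin (Real.pi * ρ)) :
    (θ + Real.pi) * ρ = Real.pi := by
  have hθρ : 0 < θ * ρ := mul_pos hθ.1 hρ.1
  have hlt : θ * ρ < Real.pi * ρ := mul_lt_mul_of_pos_right hθ.2 hρ.1
  have hπρ : Real.pi * ρ < Real.pi := mul_lt_of_lt_one_right Real.pi_pos hρ.2
  obtain ⟨k, hk | hk⟩ := Real.sin_eq_sin_iff.1 h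
  · exfalso
    have hlower : (0 : ℝ) < k := by nlinarith [Real.pi_pos]
    have hupper : (k : ℝ) < 1 := by nlinarith [Real.pi_pos]
    norm_cast at hlower hupper
    omega
  · have hlower : (-1 : ℝ) < k := by nlinarith [Real.pi_pos]
    have hupper : (k : ℝ) < 1 := by nlinarith [Real.pi_pos]
    obtain rfl : k = 0 := by
      norm_cast at hlower hupper
      omega
    push_cast at hk
    linarith

theorem add_mul_eq_pi_of_abs_phaseSum_sub_le {p : ℕ → ℝ} {K : ℝ} (hθ : θ ∈ Set.Ioo 0 Real.pi)
    (hp : ∀ j, 0 < p j) (hTheta : Summable fun j => Theta θ (p j) (p 0))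
    (hK : ∀ j, |phaseSum θ p (p j) - j| ≤ K) (hρ : 0 < ρ)
    (hsum : ∀ s > ρ, Summable fun j => p j ^ (-s)) (hnsum : ¬ Summable fun j => p j ^ (-ρ)) :
    (θ + Real.pi) * ρ = Real.pi := by
  have hlim : Tendsto p cofinite atTop :=
    tendsto_atTop_of_summable_rpow_neg (by linarith) hp (hsum (ρ + 1) (by linarith))
  have hinv : Summable fun j => (p j)⁻¹ := summable_inv_of_summable_Theta hθ (hp 0) hp hlim hTheta
  have hρ1 : ρ < 1 := by
    by_contra! h
    exact hnsum (summable_rpow_neg_mono h hp hlim (by simpa only [Real.rpow_neg_one] using hinv))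
  have hsin : Real.sin (θ * ρ) - Real.sin (Real.pi * ρ) = 0 := by
    refine eq_zero_of_abs_mul_tsum_rpow_le
      (f := fun s => Real.sin (θ * s) - Real.sin (Real.pi * s))
      (g := fun s => (4 * ∑' j, (p j)⁻¹ + (K + 1)) * Real.sin (Real.pi * s) / (1 - s))
      (by fun_prop) ?_ hp hsum hnsum ?_
    · exact ContinuousAt.div (by fun_prop) (by fun_prop) (by linarith)
    · filter_upwards [Ioo_mem_nhdsGT hρ1] with s hs
      exact abs_sin_sub_sin_mul_tsum_rpow_le hp hinv ⟨hρ.trans hs.1, hs.2⟩ (hsum s hs.1)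
        ⟨by linarith [hθ.1, Real.pi_pos], hθ.2.le⟩
        fun E hE => abs_phaseSum_sub_phaseSum_pi_le_mul_min hp hinv ⟨hθ.1.le, hθ.2⟩ hK hE
  exact add_mul_eq_pi_of_sin_mul_eq_sin_mul hθ ⟨hρ, hρ1⟩ (sub_eq_zero.1 hsin)

end Exponent

section FixedPoint

variable {θ : ℝ} {X Y Q : ℕ → ℝ} {j : ℕ}

lemma toReal_phi (hθ : θ ∈ Set.Icc 0 Real.pi) (hY : 0 ≤ Y j) :
    (phi θ X Y j).toReal = phaseSum θ (fun k => X (k + 1)) (Y j) := by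
  rw [phi, ENNReal.toReal_mul, ENNReal.toReal_ofReal (by positivity),
    ENNReal.tsum_toReal_eq fun _ => ENNReal.ofReal_ne_top]
  simp only [ENNReal.toReal_ofReal (Theta_nonneg hθ hY), phaseSum]

lemma summable_Theta_of_phi_ne_top (hθ : θ ∈ Set.Icc 0 Real.pi) (hY : 0 ≤ Y j)
    (h : phi θ X Y j ≠ ⊤) : Summable fun k => Theta θ (X (k + 1)) (Y j) := by
  have htop : ∑' k, ENNReal.ofReal (Theta θ (X (k + 1)) (Y j)) ≠ ⊤ := fun hsum => h <| by
    rw [phi, hsum, ENNReal.mul_top (ENNReal.ofReal_pos.2 (by positivity)).ne']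
  exact (ENNReal.summable_toReal htop).congr fun k => ENNReal.toReal_ofReal (Theta_nonneg hθ hY)

lemma exists_forall_abs_sub_le_of_isBigO_one
    (hQ : (fun k : ℕ => Q k - (k : ℝ)) =O[atTop] fun _ : ℕ => (1 : ℝ)) :
    ∃ K, ∀ j, |Q (j + 1) - j| ≤ K := by
  obtain ⟨K, hK⟩ := isBigO_one_nat_atTop_iff.1 hQ
  refine ⟨K + 1, fun j => ?_⟩
  have := abs_le.1 (hK (j + 1))
  push_cast at this
  rw [abs_le]
  constructor <;> linarith

end FixedPoint

section PowerGrowth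

variable {p : ℕ → ℝ} {α c s : ℝ}

lemma summable_add_one_rpow_iff :
    (Summable fun k : ℕ => ((k : ℝ) + 1) ^ s) ↔ s < -1 := by
  simpa using (summable_nat_add_iff 1).trans (Real.summable_nat_rpow (p := s))

lemma summable_rpow_neg_of_mul_rpow_le (hα : 0 < α) (hc : 0 < c)
    (hle : ∀ k : ℕ, c * ((k : ℝ) + 1) ^ α ≤ p k) (hs : α⁻¹ < s) :
    Summable fun k => p k ^ (-s) := by
  have hs0 : 0 < s := (inv_pos.2 hα).trans hs
  have hmaj : Summable fun k : ℕ => c ^ (-s) * ((k : ℝ) + 1) ^ (α * -s) :=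
    (summable_add_one_rpow_iff.2 (by linarith [(inv_lt_iff_one_lt_mul₀' hα).1 hs])).mul_left _
  have hpos (k : ℕ) : 0 < c * ((k : ℝ) + 1) ^ α := by positivity
  refine hmaj.of_nonneg_of_le (fun k => Real.rpow_nonneg ((hpos k).le.trans (hle k)) _) fun k => ?_
  rw [Real.rpow_mul (by positivity), ← Real.mul_rpow hc.le (by positivity)]
  exact Real.rpow_le_rpow_of_nonpos (hpos k) (hle k) (by linarith)

lemma not_summable_rpow_neg_of_le_mul_rpow (hα : 0 < α) (hc : 0 < c) (hp : ∀ k, 0 < p k)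
    (hle : ∀ k : ℕ, p k ≤ c * ((k : ℝ) + 1) ^ α) : ¬ Summable fun k => p k ^ (-α⁻¹) := by
  intro hsum
  have hharmonic : ¬ Summable fun k : ℕ => c ^ (-α⁻¹) * ((k : ℝ) + 1) ^ (-1 : ℝ) := by
    rw [summable_mul_left_iff (Real.rpow_pos_of_pos hc _).ne', summable_add_one_rpow_iff]
    exact lt_irrefl _
  refine hharmonic (hsum.of_nonneg_of_le (fun k => by positivity) fun k => ?_)
  calc c ^ (-α⁻¹) * ((k : ℝ) + 1) ^ (-1 : ℝ) = (c * ((k : ℝ) + 1) ^ α) ^ (-α⁻¹) := by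
        rw [Real.mul_rpow hc.le (by positivity), ← Real.rpow_mul (by positivity), mul_neg,
          mul_inv_cancel₀ hα.ne']
    _ ≤ p k ^ (-α⁻¹) := Real.rpow_le_rpow_of_nonpos (hp k) (hle k) (by simpa using hα.le)

end PowerGrowth

theorem stmt_0 (θ : ℝ) (hθ : 0 < θ) (hθπ : θ < Real.pi)
    (Q : ℕ → ℝ) (hQpos : ∀ k, 1 ≤ k → 0 < Q k)
    (hQ : (fun k : ℕ => Q k - (k : ℝ)) =O[atTop] fun _ : ℕ => (1 : ℝ))
    (P : ℕ → ℝ) (hPpos : ∀ k, 1 ≤ k → 0 < P k)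
    (hfix : ∀ j, 1 ≤ j → phi θ P P j = ENNReal.ofReal (Q j))
    (α C : ℝ) (hα : 0 < α) (hC : 1 ≤ C)
    (hbound : ∀ k : ℕ, 1 ≤ k → C⁻¹ * (k : ℝ) ^ α ≤ P k ∧ P k ≤ C * (k : ℝ) ^ α) :
    α = 1 + θ / Real.pi := by
  have hC0 : 0 < C := zero_lt_one.trans_le hC
  have hp (j : ℕ) : 0 < P (j + 1) := hPpos _ j.succ_pos
  have hθIcc : θ ∈ Set.Icc 0 Real.pi := ⟨hθ.le, hθπ.le⟩
  have hphase (j : ℕ) : phaseSum θ (fun k => P (k + 1)) (P (j + 1)) = Q (j + 1) := by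
    rw [← toReal_phi hθIcc (hp j).le, hfix _ j.succ_pos,
      ENNReal.toReal_ofReal (hQpos _ j.succ_pos).le]
  have hTheta : Summable fun k => Theta θ (P (k + 1)) (P (0 + 1)) :=
    summable_Theta_of_phi_ne_top hθIcc (hp 0).le (by simp [hfix])
  obtain ⟨K, hK⟩ := exists_forall_abs_sub_le_of_isBigO_one hQ
  have hexponent : (θ + Real.pi) * α⁻¹ = Real.pi :=
    add_mul_eq_pi_of_abs_phaseSum_sub_le ⟨hθ, hθπ⟩ hp hTheta
      (fun j => by simpa only [hphase] using hK j) (inv_pos.2 hα)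
      (fun s hs => summable_rpow_neg_of_mul_rpow_le hα (inv_pos.2 hC0)
        (fun k => by simpa using (hbound (k + 1) k.succ_pos).1) hs)
      (not_summable_rpow_neg_of_le_mul_rpow hα hC0 hp
        fun k => by simpa using (hbound (k + 1) k.succ_pos).2)
  field_simp at hexponent ⊢
  linarith
end

section
/- Assume Q_k = k + O(1) and Q_k > (k − 1/2)·θ/π for all k ≥ 1. Then there exists a sequence P = (P_k)_{k≥1} of positive reals with φ_j(P,P) = Q_j for all j ≥ 1 and P_k = k^{α_θ} + O(k^{α_θ − 1}) as k → ∞. -/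
open Filter Asymptotics MeasureTheory
open scoped ENNReal Topology

/-!
For fixed `y`, the total phase `∑ k, Θ(x k, y)` decreases in every `x k`. Hence a sequence with
prescribed phases exists, by the Knaster–Tarski theorem, as soon as there are a lower barrier with
too little phase and an upper barrier with too much. The barriers are modifications of the power
law `k ^ α`, whose total phase at `m ^ α` is `π * Drift θ α * m` up to an error of at most `θ`, by
comparison with an integral.

Integrating by parts and using the homogeneity of `w ↦ ∫ s in Ioi 0, (s ^ α + w)⁻¹` turns the
integral of `Θ(s ^ α, 1)` into a multiple of `sin (θ / α)`. As `θ → π` the integrand tends to `π`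
times the indicator function of `s < 1`, which determines the constant:
`Drift θ α = sin (θ / α) / sin (π / α)`. This is `1` at `α = 1 + θ / π`.

Replacing `k ^ α` by `(k + C) ^ α` adds `π * C` to the main term but removes only `C` summands,
each at most `θ < π`, so a large `C` absorbs the bounded error in the prescribed phases. The lower
barrier is `(k - C) ^ α` for `k > C`. Its first `C` terms are small and well separated, so that the
`k`-th of them has phase only slightly above `(k - 1 / 2) * θ`.
-/

open scoped Real

section FixedPoint

variable {ι α β : Type*} [ConditionallyCompleteLinearOrder α] [TopologicalSpace α]
  [OrderTopology α] [DenselyOrdered α] [LinearOrder β] [TopologicalSpace β]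
  [OrderClosedTopology β]

lemma exists_isGreatest_sublevel_and_eq {f : α → β} {a b : α} {c : β} (hab : a ≤ b)
    (hf : ContinuousOn f (Set.Icc a b)) (ha : f a ≤ c) (hb : c ≤ f b) :
    ∃ y, IsGreatest {y ∈ Set.Icc a b | f y ≤ c} y ∧ f y = c := by
  have hclosed : IsClosed {y ∈ Set.Icc a b | f y ≤ c} :=
    hf.preimage_isClosed_of_isClosed isClosed_Icc isClosed_Iic
  obtain ⟨y, hy⟩ := (isCompact_Icc.of_isClosed_subset hclosed fun _ h => h.1).exists_isGreatest
    ⟨a, Set.left_mem_Icc.2 hab, ha⟩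
  refine ⟨y, hy, hy.1.2.antisymm ?_⟩
  obtain ⟨z, hz, hfz⟩ := intermediate_value_Icc hy.1.1.2
    (hf.mono (Set.Icc_subset_Icc_left hy.1.1.1)) ⟨hy.1.2, hb⟩
  have hzy : z ≤ y := hy.2 ⟨⟨hy.1.1.1.trans hz.1, hz.2⟩, hfz.le⟩
  rw [← hfz, hzy.antisymm hz.1]

/- Sending `x` to the coordinatewise largest solution `y` of `Φ j x (y j) ≤ q j` is monotone,
so the solution comes from the Knaster–Tarski theorem. -/
theorem exists_mem_Icc_forall_apply_eq_of_antitoneOn {lo hi : ι → α} {q : ι → β}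
    {Φ : ι → (ι → α) → α → β} (hle : lo ≤ hi)
    (hanti : ∀ j, ∀ y ∈ Set.Icc (lo j) (hi j), AntitoneOn (Φ j · y) (Set.Icc lo hi))
    (hcont : ∀ j, ∀ x ∈ Set.Icc lo hi, ContinuousOn (Φ j x) (Set.Icc (lo j) (hi j)))
    (hlo : ∀ j, Φ j lo (lo j) ≤ q j) (hhi : ∀ j, q j ≤ Φ j hi (hi j)) :
    ∃ p ∈ Set.Icc lo hi, ∀ j, Φ j p (p j) = q j := by
  have hsolve (x : Set.Icc lo hi) (j : ι) :=
    exists_isGreatest_sublevel_and_eq (hle j) (hcont j x x.2)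
      ((hanti j _ (Set.left_mem_Icc.2 (hle j)) (Set.left_mem_Icc.2 hle) x.2 x.2.1).trans (hlo j))
      ((hhi j).trans
        (hanti j _ (Set.right_mem_Icc.2 (hle j)) x.2 (Set.right_mem_Icc.2 hle) x.2.2))
  choose T hgreatest heq using hsolve
  have : Fact (lo ≤ hi) := ⟨hle⟩
  let F : Set.Icc lo hi →o Set.Icc lo hi :=
    { toFun := fun x =>
        ⟨T x, fun j => (hgreatest x j).1.1.1, fun j => (hgreatest x j).1.1.2⟩
      monotone' := fun x x' hxx' j => (hgreatest x' j).2 ⟨(hgreatest x j).1.1,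
        (hanti j _ (hgreatest x j).1.1 x.2 x'.2 hxx').trans (hgreatest x j).1.2⟩ }
  have hfixed : T F.lfp = F.lfp := congrArg Subtype.val F.map_lfp
  exact ⟨F.lfp, F.lfp.2, fun j => by simpa only [hfixed] using heq F.lfp j⟩

end FixedPoint

lemma add_norm_mul_cos_half_arg_le_norm_ofReal_add (x : ℝ) (w : ℂ) :
    (x + ‖w‖) * Real.cos (w.arg / 2) ≤ ‖(x : ℂ) + w‖ := by
  have hsq : ‖(x : ℂ) + w‖ ^ 2 = x ^ 2 + 2 * x * (‖w‖ * Real.cos w.arg) + ‖w‖ ^ 2 := by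
    rw [Complex.norm_mul_cos_arg, ← Complex.normSq_eq_norm_sq, ← Complex.normSq_eq_norm_sq,
      Complex.normSq_apply, Complex.normSq_apply]
    simp only [Complex.add_re, Complex.ofReal_re, Complex.add_im, Complex.ofReal_im]
    ring
  refine le_of_sq_le_sq ?_ (norm_nonneg _)
  rw [hsq, mul_pow, Real.cos_sq, mul_div_cancel₀ _ two_ne_zero]
  nlinarith [mul_nonneg (sub_nonneg.2 (Real.cos_le_one w.arg)) (sq_nonneg (x - ‖w‖))]

lemma exists_eventually_mul_one_add_le_norm_ofReal_add {w : ℂ} (hw : w ∈ Complex.slitPlane) :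
    ∃ c > 0, ∀ᶠ z in 𝓝 w, ∀ x : ℝ, 0 ≤ x → c * (1 + x) ≤ ‖(x : ℂ) + z‖ := by
  have hcos : 0 < Real.cos (w.arg / 2) := by
    have := Complex.neg_pi_lt_arg w
    have := (Complex.arg_le_pi w).lt_of_ne (Complex.mem_slitPlane_iff_arg.1 hw).1
    exact Real.cos_pos_of_mem_Ioo ⟨by linarith, by linarith⟩
  have hnorm : 0 < min 1 ‖w‖ := lt_min one_pos (norm_pos_iff.2 (Complex.slitPlane_ne_zero hw))
  obtain ⟨c, hc, hcw⟩ := exists_between (mul_pos hnorm hcos)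
  have hcont : ContinuousAt (fun z : ℂ => min 1 ‖z‖ * Real.cos (z.arg / 2)) w := by
    have := Complex.continuousAt_arg hw
    fun_prop
  refine ⟨c, hc, (hcont.eventually (lt_mem_nhds hcw)).mono fun z hz x hx => ?_⟩
  have hcosz : 0 ≤ Real.cos (z.arg / 2) := by
    have := abs_le.1 (Complex.abs_arg_le_pi z)
    exact Real.cos_nonneg_of_mem_Icc ⟨by linarith, by linarith⟩
  calc c * (1 + x) ≤ min 1 ‖z‖ * Real.cos (z.arg / 2) * (1 + x) := by gcongr
    _ = min 1 ‖z‖ * (1 + x) * Real.cos (z.arg / 2) := by ring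
    _ ≤ (x + ‖z‖) * Real.cos (z.arg / 2) := by
      gcongr
      nlinarith [min_le_left 1 ‖z‖, min_le_right 1 ‖z‖]
    _ ≤ ‖(x : ℂ) + z‖ := add_norm_mul_cos_half_arg_le_norm_ofReal_add x z

section StieltjesTransform

variable {X : Type*} [MeasurableSpace X] {μ : Measure X} {f : X → ℝ} {w : ℂ}

lemma integrable_inv_ofReal_add (hf : AEMeasurable f μ) (hf₀ : 0 ≤ᵐ[μ] f)
    (hint : Integrable (fun s => (1 + f s)⁻¹) μ) (hw : w ∈ Complex.slitPlane) :
    Integrable (fun s => ((f s : ℂ) + w)⁻¹) μ := by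
  obtain ⟨c, hc, hbound⟩ := exists_eventually_mul_one_add_le_norm_ofReal_add hw
  refine (hint.const_mul c⁻¹).mono' (by fun_prop) (hf₀.mono fun s (hs : 0 ≤ f s) => ?_)
  rw [norm_inv, ← mul_inv]
  exact inv_anti₀ (by positivity) (hbound.self_of_nhds _ hs)

lemma hasDerivAt_integral_inv_ofReal_add (hf : AEMeasurable f μ) (hf₀ : 0 ≤ᵐ[μ] f)
    (hint : Integrable (fun s => (1 + f s)⁻¹) μ) (hw : w ∈ Complex.slitPlane) :
    HasDerivAt (fun z => ∫ s, ((f s : ℂ) + z)⁻¹ ∂μ) (∫ s, -1 / ((f s : ℂ) + w) ^ 2 ∂μ) w := by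
  obtain ⟨c, hc, hbound⟩ := exists_eventually_mul_one_add_le_norm_ofReal_add hw
  refine (hasDerivAt_integral_of_dominated_loc_of_deriv_le (F := fun z s => ((f s : ℂ) + z)⁻¹)
    (F' := fun z s => -1 / ((f s : ℂ) + z) ^ 2)
    (bound := fun s => (c ^ 2)⁻¹ * (1 + f s)⁻¹)
    hbound (.of_forall fun z => by fun_prop) (integrable_inv_ofReal_add hf hf₀ hint hw)
    (AEMeasurable.aestronglyMeasurable (by fun_prop)) ?_ (hint.const_mul _) ?_).2
  · filter_upwards [hf₀] with s (hs : 0 ≤ f s) z hz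
    rw [norm_div, norm_neg, norm_one, norm_pow, one_div, ← mul_inv]
    refine inv_anti₀ (by positivity) ?_
    calc c ^ 2 * (1 + f s) ≤ (c * (1 + f s)) ^ 2 := by
          rw [mul_pow]
          gcongr
          exact le_self_pow₀ (by linarith) two_ne_zero
      _ ≤ ‖(f s : ℂ) + z‖ ^ 2 := by gcongr; exact hz _ hs
  · filter_upwards [hf₀] with s (hs : 0 ≤ f s) z hz
    have hne : (f s : ℂ) + z ≠ 0 := norm_pos_iff.1 ((by positivity : 0 < c * (1 + f s)).trans_le
      (hz _ hs))
    exact ((hasDerivAt_id z).const_add _).inv hne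

end StieltjesTransform

section PowerStieltjesTransform

variable {α : ℝ} {w : ℂ}

lemma integrableOn_inv_one_add_rpow (hα : 1 < α) :
    IntegrableOn (fun s : ℝ => (1 + s ^ α)⁻¹) (Set.Ioi 0) := by
  have hint : Integrable (fun s : ℝ => (1 + ‖s‖) ^ (-α)) := integrable_one_add_norm (by simpa)
  refine (hint.integrableOn.const_mul (2 ^ (α - 1))).mono' (by fun_prop) ?_
  filter_upwards [ae_restrict_mem measurableSet_Ioi] with s (hs : 0 < s)
  have hle : (1 + s) ^ α ≤ 2 ^ (α - 1) * (1 ^ α + s ^ α) := mod_cast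
    NNReal.rpow_add_le_mul_rpow_add_rpow 1 ⟨s, hs.le⟩ hα.le
  rw [Real.one_rpow] at hle
  rw [Real.norm_of_nonneg hs.le, Real.norm_of_nonneg (by positivity),
    Real.rpow_neg (by positivity), ← div_eq_mul_inv, inv_eq_one_div,
    div_le_div_iff₀ (by positivity) (by positivity), one_mul]
  exact hle

lemma ae_nonneg_rpow : 0 ≤ᵐ[volume.restrict (Set.Ioi 0)] fun s : ℝ => s ^ α := by
  filter_upwards [ae_restrict_mem measurableSet_Ioi] with s hs
  exact Real.rpow_nonneg (le_of_lt hs) α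

lemma integrableOn_inv_rpow_add (hα : 1 < α) (hw : w ∈ Complex.slitPlane) :
    IntegrableOn (fun s : ℝ => (((s ^ α : ℝ) : ℂ) + w)⁻¹) (Set.Ioi 0) :=
  integrable_inv_ofReal_add (by fun_prop) ae_nonneg_rpow (integrableOn_inv_one_add_rpow hα) hw

lemma integral_inv_rpow_add_ofReal (hα : α ≠ 0) {r : ℝ} (hr : 0 < r) :
    ∫ s in Set.Ioi (0 : ℝ), (((s ^ α : ℝ) : ℂ) + r)⁻¹ =
      (r : ℂ) ^ ((1 / α - 1 : ℝ) : ℂ) * ∫ s in Set.Ioi (0 : ℝ), (((s ^ α : ℝ) : ℂ) + 1)⁻¹ := by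
  have hb : 0 < r ^ (1 / α) := Real.rpow_pos_of_pos hr _
  have hscale := integral_comp_mul_left_Ioi (fun s : ℝ => (((s ^ α : ℝ) : ℂ) + r)⁻¹) 0 hb
  have hpoint : ∀ s ∈ Set.Ioi (0 : ℝ), ((((r ^ (1 / α) * s) ^ α : ℝ) : ℂ) + r)⁻¹ =
      (r : ℂ)⁻¹ * (((s ^ α : ℝ) : ℂ) + 1)⁻¹ := by
    intro s hs
    rw [Real.mul_rpow hb.le (le_of_lt hs), ← Real.rpow_mul hr.le, one_div_mul_cancel hα,
      Real.rpow_one, ← mul_inv]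
    push_cast
    ring
  rw [setIntegral_congr_fun measurableSet_Ioi hpoint, integral_const_mul, mul_zero,
    eq_inv_smul_iff₀ hb.ne'] at hscale
  rw [← hscale, Complex.real_smul, ← mul_assoc, ← Complex.ofReal_cpow hr.le,
    Real.rpow_sub_one hr.ne']
  push_cast
  rfl

/- Both sides are holomorphic on the slit plane, and they agree on the positive half-line. -/
theorem integral_inv_rpow_add (hα : 1 < α) (hw : w ∈ Complex.slitPlane) :
    ∫ s in Set.Ioi (0 : ℝ), (((s ^ α : ℝ) : ℂ) + w)⁻¹ =
      w ^ ((1 / α - 1 : ℝ) : ℂ) * ∫ s in Set.Ioi (0 : ℝ), (((s ^ α : ℝ) : ℂ) + 1)⁻¹ := by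
  have hleft : DifferentiableOn ℂ (fun z => ∫ s in Set.Ioi (0 : ℝ), (((s ^ α : ℝ) : ℂ) + z)⁻¹)
      Complex.slitPlane := fun z hz =>
    (hasDerivAt_integral_inv_ofReal_add (by fun_prop) ae_nonneg_rpow
      (integrableOn_inv_one_add_rpow hα) hz).differentiableAt.differentiableWithinAt
  have hright : DifferentiableOn ℂ (fun z : ℂ => z ^ ((1 / α - 1 : ℝ) : ℂ) *
      ∫ s in Set.Ioi (0 : ℝ), (((s ^ α : ℝ) : ℂ) + 1)⁻¹) Complex.slitPlane :=
    (differentiableOn_id.cpow_const fun _ hz => hz).mul_const _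
  have hofReal : Tendsto ((↑) : ℝ → ℂ) (𝓝[≠] 1) (𝓝[≠] 1) :=
    tendsto_nhdsWithin_of_tendsto_nhds_of_eventually_within _
      ((Complex.continuous_ofReal.tendsto' 1 1 Complex.ofReal_one).mono_left nhdsWithin_le_nhds)
      (eventually_mem_nhdsWithin.mono fun r hr => by simpa using hr)
  have hpos : ∀ᶠ r : ℝ in 𝓝[≠] 1, 0 < r :=
    nhdsWithin_le_nhds (lt_mem_nhds one_pos)
  exact (hleft.analyticOnNhd Complex.isOpen_slitPlane).eqOn_of_preconnected_of_frequently_eq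
    (hright.analyticOnNhd Complex.isOpen_slitPlane)
    (Complex.starConvex_one_slitPlane.isPathConnected
      Complex.one_mem_slitPlane).isConnected.isPreconnected
    Complex.one_mem_slitPlane
    (hofReal.frequently (hpos.mono fun r hr =>
      integral_inv_rpow_add_ofReal (by positivity) hr).frequently) hw

end PowerStieltjesTransform

lemma arg_eq_pi_div_two_sub_arctan {z : ℂ} (hz : 0 < z.im) :
    z.arg = π / 2 - Real.arctan (z.re / z.im) := by
  have hnorm : ‖z‖ = z.im * √(1 + (z.re / z.im) ^ 2) := by
    have hsq : z.re ^ 2 + z.im ^ 2 = z.im ^ 2 * (1 + (z.re / z.im) ^ 2) := by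
      field_simp
      ring
    rw [Complex.norm_eq_sqrt_sq_add_sq, hsq, Real.sqrt_mul (sq_nonneg _), Real.sqrt_sq hz.le]
  rw [Complex.arg_of_im_pos hz, Real.arccos, Real.arctan_eq_arcsin, hnorm, div_div]

section Theta

variable {θ x y : ℝ}

lemma Theta_eq_pi_div_two_sub_arctan (hθ : θ ∈ Set.Ioo 0 π) (hy : 0 < y) :
    Theta θ x y = π / 2 - Real.arctan ((x / y + Real.cos θ) / Real.sin θ) := by
  have hsin := Real.sin_pos_of_mem_Ioo hθ
  have hre : ((x : ℂ) + y * Complex.exp (θ * Complex.I)).re = x + y * Real.cos θ := by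
    simp [Complex.exp_ofReal_mul_I_re]
  have him : ((x : ℂ) + y * Complex.exp (θ * Complex.I)).im = y * Real.sin θ := by
    simp [Complex.exp_ofReal_mul_I_im]
  rw [Theta, arg_eq_pi_div_two_sub_arctan (by rw [him]; positivity), hre, him]
  congr 2
  field_simp

lemma Theta_nonneg_s1 (hθ : θ ∈ Set.Ioo 0 π) (hy : 0 < y) : 0 ≤ Theta θ x y := by
  rw [Theta_eq_pi_div_two_sub_arctan hθ hy, sub_nonneg]
  exact (Real.arctan_lt_pi_div_two _).le

lemma Theta_le_Theta {x' y' : ℝ} (hθ : θ ∈ Set.Ioo 0 π) (hx' : 0 ≤ x') (hy : 0 < y)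
    (hxx' : x' ≤ x) (hyy' : y ≤ y') : Theta θ x y ≤ Theta θ x' y' := by
  have hsin := Real.sin_pos_of_mem_Ioo hθ
  rw [Theta_eq_pi_div_two_sub_arctan hθ hy, Theta_eq_pi_div_two_sub_arctan hθ (hy.trans_le hyy')]
  gcongr
  exact hx'.trans hxx'

lemma Theta_mul_left {c : ℝ} (hc : 0 < c) : Theta θ (c * x) (c * y) = Theta θ x y := by
  rw [Theta, Theta, ← Complex.arg_real_mul ((x : ℂ) + _) hc]
  push_cast
  ring_nf

lemma Theta_zero_left (hθ : θ ∈ Set.Ioo 0 π) (hy : 0 < y) : Theta θ 0 y = θ := by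
  rw [Theta, Complex.ofReal_zero, zero_add, Complex.arg_real_mul _ hy, Complex.arg_exp_mul_I]
  exact (toIocMod_eq_self _).2 ⟨by linarith [hθ.1, Real.pi_pos], by linarith [hθ.2]⟩

lemma Theta_le (hθ : θ ∈ Set.Ioo 0 π) (hx : 0 ≤ x) (hy : 0 < y) : Theta θ x y ≤ θ :=
  (Theta_le_Theta hθ le_rfl hy hx le_rfl).trans_eq (Theta_zero_left hθ hy)

lemma Theta_self (hθ : θ ∈ Set.Ioo 0 π) (hy : 0 < y) : Theta θ y y = θ / 2 := by
  have hcos : 0 < Real.cos (θ / 2) :=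
    Real.cos_pos_of_mem_Ioo ⟨by linarith [hθ.1, hθ.2], by linarith [hθ.2]⟩
  have hpolar : (y : ℂ) + y * Complex.exp (θ * Complex.I) = (y * (2 * Real.cos (θ / 2)) : ℝ) *
      Complex.exp ((θ / 2 : ℝ) * Complex.I) := by
    push_cast
    rw [Complex.two_cos, mul_assoc, add_mul, ← Complex.exp_add, ← Complex.exp_add]
    ring_nf
    rw [Complex.exp_zero, mul_one, add_comm]
  rw [Theta, hpolar, Complex.arg_real_mul _ (by positivity), Complex.arg_exp_mul_I]
  exact (toIocMod_eq_self _).2 ⟨by linarith [hθ.1, hθ.2], by linarith [hθ.1, hθ.2]⟩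

lemma Theta_le_div (hθ : θ ∈ Set.Ioo 0 π) (hx : 0 ≤ x) (hy : 0 < y) :
    Theta θ x y ≤ 3 * π * (y / (x + y)) := by
  rw [← mul_div_assoc, le_div_iff₀ (by positivity)]
  obtain hxy | hxy := le_or_gt x (2 * y)
  · nlinarith [Theta_le hθ hx hy, hθ.1, hθ.2]
  set z : ℂ := x + y * Complex.exp (θ * Complex.I) with hz
  have harg : 0 ≤ z.arg := Theta_nonneg_s1 hθ hy
  have hre : x - y ≤ z.re := by
    simp only [hz, Complex.add_re, Complex.ofReal_re, Complex.re_ofReal_mul,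
      Complex.exp_ofReal_mul_I_re]
    nlinarith [Real.neg_one_le_cos θ]
  have him : z.im ≤ y := by
    simp only [hz, Complex.add_im, Complex.ofReal_im, Complex.im_ofReal_mul,
      Complex.exp_ofReal_mul_I_im, zero_add]
    exact mul_le_of_le_one_right hy.le (Real.sin_le_one θ)
  have hjordan : 2 / π * z.arg ≤ Real.sin z.arg := Real.mul_le_sin harg
    (Complex.arg_le_pi_div_two_iff.2 (.inl (by linarith)))
  have hkey : 2 * (z.arg * (x - y)) ≤ y * π := by
    rw [← div_le_iff₀ Real.pi_pos]
    calc 2 * (z.arg * (x - y)) / π = (x - y) * (2 / π * z.arg) := by ring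
      _ ≤ ‖z‖ * Real.sin z.arg := by
        gcongr
        exact hre.trans (Complex.re_le_norm z)
      _ ≤ y := by rwa [Complex.norm_mul_sin_arg]
  calc Theta θ x y * (x + y) ≤ 3 * (z.arg * (x - y)) := by
        rw [show Theta θ x y = z.arg from rfl]
        nlinarith
    _ ≤ 3 * π * y := by nlinarith [Real.pi_pos]

lemma continuousOn_Theta_right (hθ : θ ∈ Set.Ioo 0 π) :
    ContinuousOn (Theta θ x) (Set.Ioi 0) := by
  have hformula : ContinuousOn
      (fun y => π / 2 - Real.arctan ((x / y + Real.cos θ) / Real.sin θ)) (Set.Ioi 0) :=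
    continuousOn_const.sub (Real.continuous_arctan.comp_continuousOn
      (((continuousOn_const.div continuousOn_id fun y hy => ne_of_gt hy).add
        continuousOn_const).div_const _))
  exact hformula.congr fun y hy => Theta_eq_pi_div_two_sub_arctan hθ hy

lemma ofReal_add_exp_mem_slitPlane (hθ : θ ∈ Set.Ioo 0 π) :
    (x : ℂ) + Complex.exp (θ * Complex.I) ∈ Complex.slitPlane :=
  .inr (by simpa [Complex.exp_ofReal_mul_I_im] using (Real.sin_pos_of_mem_Ioo hθ).ne')

lemma hasDerivAt_Theta_left (hθ : θ ∈ Set.Ioo 0 π) :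
    HasDerivAt (Theta θ · 1) ((x : ℂ) + Complex.exp (θ * Complex.I))⁻¹.im x := by
  have hlog := ((Complex.ofRealCLM.hasDerivAt (x := x)).add_const
    (Complex.exp (θ * Complex.I))).clog_real (ofReal_add_exp_mem_slitPlane hθ)
  simpa only [Function.comp_def, Theta, one_div, Complex.imCLM_apply, Complex.ofRealCLM_apply,
    Complex.log_im, Complex.ofReal_one, one_mul] using
    Complex.imCLM.hasFDerivAt.comp_hasDerivAt x hlog

end Theta

section Drift

variable {θ α : ℝ}

lemma continuous_Theta_rpow (hθ : θ ∈ Set.Ioo 0 π) (hα : 0 ≤ α) :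
    Continuous fun s : ℝ => Theta θ (s ^ α) 1 :=
  (continuous_iff_continuousAt.2 fun _ => (hasDerivAt_Theta_left hθ).continuousAt).comp
    (Real.continuous_rpow_const hα)

lemma Theta_rpow_one_le (hθ : θ ∈ Set.Ioo 0 π) {s : ℝ} (hs : 0 ≤ s) :
    Theta θ (s ^ α) 1 ≤ 3 * π * (1 + s ^ α)⁻¹ := by
  simpa only [one_div, add_comm] using Theta_le_div hθ (Real.rpow_nonneg hs α) one_pos

lemma integrableOn_Theta_rpow (hθ : θ ∈ Set.Ioo 0 π) (hα : 1 < α) :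
    IntegrableOn (fun s : ℝ => Theta θ (s ^ α) 1) (Set.Ioi 0) := by
  refine ((integrableOn_inv_one_add_rpow hα).const_mul (3 * π)).mono'
    (continuous_Theta_rpow hθ (by linarith)).aestronglyMeasurable ?_
  filter_upwards [ae_restrict_mem measurableSet_Ioi] with s hs
  rw [Real.norm_of_nonneg (Theta_nonneg_s1 hθ one_pos)]
  exact Theta_rpow_one_le hθ (le_of_lt hs)

lemma tendsto_mul_Theta_rpow_atTop (hθ : θ ∈ Set.Ioo 0 π) (hα : 1 < α) :
    Tendsto (fun s : ℝ => s * Theta θ (s ^ α) 1) atTop (𝓝 0) := by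
  have hlim : Tendsto (fun s : ℝ => 3 * π * s ^ (-(α - 1))) atTop (𝓝 0) := by
    simpa only [mul_zero] using (tendsto_rpow_neg_atTop (sub_pos.2 hα)).const_mul (3 * π)
  refine squeeze_zero' ?_ ?_ hlim
  · filter_upwards [eventually_ge_atTop 0] with s hs
      using mul_nonneg hs (Theta_nonneg_s1 hθ one_pos)
  · filter_upwards [eventually_gt_atTop 0] with s hs
    calc s * Theta θ (s ^ α) 1 ≤ s * (3 * π * (s ^ α)⁻¹) := by
          gcongr
          refine (Theta_rpow_one_le hθ hs.le).trans ?_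
          gcongr
          linarith
      _ = 3 * π * s ^ (-(α - 1)) := by
          rw [neg_sub, Real.rpow_sub hs, Real.rpow_one]
          ring

lemma hasDerivAt_mul_Theta_rpow (hθ : θ ∈ Set.Ioo 0 π) {s : ℝ} (hs : 0 < s) :
    HasDerivAt (fun s : ℝ => s * Theta θ (s ^ α) 1) (Theta θ (s ^ α) 1 -
      α * (Complex.exp (θ * Complex.I) *
        (((s ^ α : ℝ) : ℂ) + Complex.exp (θ * Complex.I))⁻¹).im) s := by
  set w := Complex.exp (θ * Complex.I)
  have hw : ((s ^ α : ℝ) : ℂ) + w ≠ 0 := Complex.slitPlane_ne_zero (ofReal_add_exp_mem_slitPlane hθ)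
  have hcancel : w * (((s ^ α : ℝ) : ℂ) + w)⁻¹ =
      1 - ((s ^ α : ℝ) : ℂ) * (((s ^ α : ℝ) : ℂ) + w)⁻¹ := by
    field_simp
    ring
  refine ((hasDerivAt_id s).mul ((hasDerivAt_Theta_left hθ).comp s
    (Real.hasDerivAt_rpow_const (.inl hs.ne')))).congr_deriv ?_
  rw [hcancel, Complex.sub_im, Complex.one_im, Complex.im_ofReal_mul, Real.rpow_sub_one hs.ne']
  simp only [id, Function.comp_apply]
  field_simp
  ring

lemma integral_Theta_rpow_eq_im (hθ : θ ∈ Set.Ioo 0 π) (hα : 1 < α) :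
    ∫ s in Set.Ioi (0 : ℝ), Theta θ (s ^ α) 1 =
      α * (Complex.exp (θ * Complex.I) * ∫ s in Set.Ioi (0 : ℝ),
        (((s ^ α : ℝ) : ℂ) + Complex.exp (θ * Complex.I))⁻¹).im := by
  have hw : Complex.exp (θ * Complex.I) ∈ Complex.slitPlane := by
    simpa using ofReal_add_exp_mem_slitPlane (x := 0) hθ
  have hint := (integrableOn_inv_rpow_add hα hw).const_mul (Complex.exp (θ * Complex.I))
  have hint_im : IntegrableOn (fun s : ℝ => α * (Complex.exp (θ * Complex.I) *
      (((s ^ α : ℝ) : ℂ) + Complex.exp (θ * Complex.I))⁻¹).im) (Set.Ioi 0) := hint.im.const_mul α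
  have him := integral_im hint
  have hzero := integral_Ioi_of_hasDerivAt_of_tendsto
    (continuous_id.mul (continuous_Theta_rpow hθ (by linarith))).continuousWithinAt
    (fun s hs => hasDerivAt_mul_Theta_rpow hθ hs)
    ((integrableOn_Theta_rpow hθ hα).sub hint_im)
    (tendsto_mul_Theta_rpow_atTop hθ hα)
  rw [integral_sub (integrableOn_Theta_rpow hθ hα) hint_im] at hzero
  simp only [RCLike.im_to_complex, integral_const_mul] at him hzero
  rw [← him]
  simpa [sub_eq_zero] using hzero

lemma integral_Theta_rpow (hθ : θ ∈ Set.Ioo 0 π) (hα : 1 < α) :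
    ∫ s in Set.Ioi (0 : ℝ), Theta θ (s ^ α) 1 =
      α * (∫ s in Set.Ioi (0 : ℝ), (s ^ α + 1)⁻¹) * Real.sin (θ / α) := by
  have hw : Complex.exp (θ * Complex.I) ∈ Complex.slitPlane := by
    simpa using ofReal_add_exp_mem_slitPlane (x := 0) hθ
  have hpow : Complex.exp (θ * Complex.I) * Complex.exp (θ * Complex.I) ^ ((1 / α - 1 : ℝ) : ℂ) =
      Complex.exp ((θ / α : ℝ) * Complex.I) := by
    rw [Complex.cpow_def_of_ne_zero (Complex.exp_ne_zero _), Complex.log_exp, ← Complex.exp_add]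
    · push_cast
      ring_nf
    · simpa using (neg_lt_zero.2 Real.pi_pos).trans hθ.1
    · simpa using hθ.2.le
  have hreal : ∫ s in Set.Ioi (0 : ℝ), (((s ^ α : ℝ) : ℂ) + 1)⁻¹ =
      ((∫ s in Set.Ioi (0 : ℝ), (s ^ α + 1)⁻¹ : ℝ) : ℂ) := by
    rw [← integral_complex_ofReal]
    push_cast
    rfl
  rw [integral_Theta_rpow_eq_im hθ hα, integral_inv_rpow_add hα hw, ← mul_assoc, hpow, hreal,
    Complex.im_mul_ofReal, Complex.exp_ofReal_mul_I_im]
  ring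

lemma continuousWithinAt_arg_im_nonneg {z : ℂ} (hz : z ≠ 0) :
    ContinuousWithinAt Complex.arg {w | 0 ≤ w.im} z := by
  by_cases hslit : z ∈ Complex.slitPlane
  · exact (Complex.continuousAt_arg hslit).continuousWithinAt
  · rw [Complex.mem_slitPlane_iff, not_or, not_lt, not_not] at hslit
    exact Complex.continuousWithinAt_arg_of_re_neg_of_im_zero
      (hslit.1.lt_of_ne fun h => hz (Complex.ext h hslit.2)) hslit.2

lemma tendsto_Theta_nhdsLT_pi {x : ℝ} (hx : x ≠ 1) :
    Tendsto (Theta · x 1) (𝓝[<] π) (𝓝 ((x - 1 : ℝ) : ℂ).arg) := by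
  refine (continuousWithinAt_arg_im_nonneg (z := ((x - 1 : ℝ) : ℂ))
    (by exact_mod_cast sub_ne_zero.2 hx)).tendsto.comp
    (tendsto_nhdsWithin_iff.2 ⟨?_, ?_⟩)
  · refine (Continuous.tendsto' (by fun_prop) π _ ?_).mono_left nhdsWithin_le_nhds
    simp [sub_eq_add_neg]
  · filter_upwards [Ioo_mem_nhdsLT Real.pi_pos] with t ht
    simpa [Complex.exp_ofReal_mul_I_im] using (Real.sin_pos_of_mem_Ioo ht).le

lemma integral_arg_rpow_sub_one (hα : 0 < α) :
    ∫ s in Set.Ioi (0 : ℝ), ((s ^ α - 1 : ℝ) : ℂ).arg = π := by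
  have hindicator : ∀ s ∈ Set.Ioi (0 : ℝ), ((s ^ α - 1 : ℝ) : ℂ).arg =
      (Set.Iio (1 : ℝ)).indicator (fun _ => π) s := by
    intro s hs
    obtain h | h := lt_or_ge s 1
    · rw [Set.indicator_of_mem (Set.mem_Iio.2 h), Complex.arg_ofReal_of_neg
        (sub_neg.2 (Real.rpow_lt_one (le_of_lt hs) h hα))]
    · rw [Set.indicator_of_notMem (Set.notMem_Iio.2 h), Complex.arg_ofReal_of_nonneg
        (sub_nonneg.2 (Real.one_le_rpow h hα.le))]
  rw [setIntegral_congr_fun measurableSet_Ioi hindicator, setIntegral_indicator measurableSet_Iio,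
    Set.Ioi_inter_Iio, setIntegral_const]
  simp

lemma tendsto_integral_Theta_rpow_nhdsLT_pi (hα : 1 < α) :
    Tendsto (fun t => ∫ s in Set.Ioi (0 : ℝ), Theta t (s ^ α) 1) (𝓝[<] π) (𝓝 π) := by
  have hα₀ : 0 < α := by linarith
  have hmem : ∀ᶠ t in 𝓝[<] π, t ∈ Set.Ioo 0 π := Ioo_mem_nhdsLT Real.pi_pos
  suffices h : Tendsto (fun t => ∫ s in Set.Ioi (0 : ℝ), Theta t (s ^ α) 1) (𝓝[<] π)
      (𝓝 (∫ s in Set.Ioi (0 : ℝ), ((s ^ α - 1 : ℝ) : ℂ).arg)) by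
    rwa [integral_arg_rpow_sub_one hα₀] at h
  refine tendsto_integral_filter_of_dominated_convergence (fun s => 3 * π * (1 + s ^ α)⁻¹)
    (hmem.mono fun t ht => (continuous_Theta_rpow ht hα₀.le).aestronglyMeasurable)
    (hmem.mono fun t ht => ?_) ((integrableOn_inv_one_add_rpow hα).const_mul _) ?_
  · filter_upwards [ae_restrict_mem measurableSet_Ioi] with s hs
    rw [Real.norm_of_nonneg (Theta_nonneg_s1 ht one_pos)]
    exact Theta_rpow_one_le ht (le_of_lt hs)
  · filter_upwards [ae_restrict_mem measurableSet_Ioi,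
      ae_restrict_of_ae (Measure.ae_ne volume (1 : ℝ))] with s hs hs₁
    refine tendsto_Theta_nhdsLT_pi fun h => hs₁ ?_
    rwa [← Real.one_rpow α, Real.rpow_left_inj (le_of_lt hs) zero_le_one hα₀.ne'] at h

lemma integral_inv_rpow_add_one_mul_sin (hα : 1 < α) :
    α * (∫ s in Set.Ioi (0 : ℝ), (s ^ α + 1)⁻¹) * Real.sin (π / α) = π := by
  have hcont : Continuous fun t => α * (∫ s in Set.Ioi (0 : ℝ), (s ^ α + 1)⁻¹) *
      Real.sin (t / α) := by fun_prop
  refine tendsto_nhds_unique (hcont.continuousWithinAt (s := Set.Iio π)).tendsto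
    ((tendsto_integral_Theta_rpow_nhdsLT_pi hα).congr' ?_)
  filter_upwards [Ioo_mem_nhdsLT Real.pi_pos] with t ht using integral_Theta_rpow ht hα

theorem Drift_eq_sin_div_sin (hθ : θ ∈ Set.Ioo 0 π) (hα : 1 < α) :
    Drift θ α = Real.sin (θ / α) / Real.sin (π / α) := by
  have hsin : Real.sin (π / α) ≠ 0 := (Real.sin_pos_of_pos_of_lt_pi
    (div_pos Real.pi_pos (by linarith)) (div_lt_self Real.pi_pos hα)).ne'
  rw [Drift, integral_Theta_rpow hθ hα, eq_div_iff hsin, one_div, inv_mul_eq_div,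
    div_mul_eq_mul_div, div_eq_iff Real.pi_ne_zero]
  linear_combination Real.sin (θ / α) * integral_inv_rpow_add_one_mul_sin hα

lemma Drift_one_add_div_pi (hθ : θ ∈ Set.Ioo 0 π) : Drift θ (1 + θ / π) = 1 := by
  have hα : 1 < 1 + θ / π := by linarith [div_pos hθ.1 Real.pi_pos]
  have hsupp : π / (1 + θ / π) = π - θ / (1 + θ / π) := by
    have := Real.pi_pos
    have := hθ.1
    field_simp
    ring
  rw [Drift_eq_sin_div_sin hθ hα, hsupp, Real.sin_pi_sub, div_self]
  rw [← Real.sin_pi_sub, ← hsupp]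
  exact (Real.sin_pos_of_pos_of_lt_pi (div_pos Real.pi_pos (by linarith))
    (div_lt_self Real.pi_pos hα)).ne'

end Drift

section ThetaSum

variable {θ : ℝ}

/-- The total phase `∑ k, Θ(x k, y)`, that is, `π` times the function `φ` as a real number. As for
any real `tsum`, the value is `0` when the series diverges. -/
noncomputable def thetaSum {ι : Type*} (θ : ℝ) (x : ι → ℝ) (y : ℝ) : ℝ :=
  ∑' k, Theta θ (x k) y

lemma summable_inv_of_le {ι : Type*} {lo x : ι → ℝ} (hlo : ∀ k, 0 < lo k)
    (hsum : Summable fun k => (lo k)⁻¹) (hle : lo ≤ x) : Summable fun k => (x k)⁻¹ :=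
  .of_nonneg_of_le (fun k => inv_nonneg.2 ((hlo k).le.trans (hle k)))
    (fun k => inv_anti₀ (hlo k) (hle k)) hsum

lemma Theta_le_inv (hθ : θ ∈ Set.Ioo 0 π) {x y : ℝ} (hx : 0 < x) (hy : 0 < y) :
    Theta θ x y ≤ 3 * π * y * x⁻¹ := by
  rw [mul_assoc, ← div_eq_mul_inv]
  refine (Theta_le_div hθ hx.le hy).trans ?_
  gcongr
  linarith

lemma summable_Theta_s1 (hθ : θ ∈ Set.Ioo 0 π) {ι : Type*} {x : ι → ℝ} (hx : ∀ k, 0 < x k)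
    (hsum : Summable fun k => (x k)⁻¹) {y : ℝ} (hy : 0 < y) :
    Summable fun k => Theta θ (x k) y :=
  .of_nonneg_of_le (fun _ => Theta_nonneg_s1 hθ hy) (fun k => Theta_le_inv hθ (hx k) hy)
    (hsum.mul_left _)

lemma thetaSum_le_thetaSum (hθ : θ ∈ Set.Ioo 0 π) {ι : Type*} {x x' : ι → ℝ}
    (hx : ∀ k, 0 < x k) (hsum : Summable fun k => (x k)⁻¹) (hle : x ≤ x') {y : ℝ} (hy : 0 < y) :
    thetaSum θ x' y ≤ thetaSum θ x y :=
  Summable.tsum_le_tsum (fun k => Theta_le_Theta hθ (hx k).le hy (hle k) le_rfl)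
    (summable_Theta_s1 hθ (fun k => (hx k).trans_le (hle k)) (summable_inv_of_le hx hsum hle) hy)
    (summable_Theta_s1 hθ hx hsum hy)

lemma continuousOn_thetaSum (hθ : θ ∈ Set.Ioo 0 π) {ι : Type*} {x : ι → ℝ} (hx : ∀ k, 0 < x k)
    (hsum : Summable fun k => (x k)⁻¹) : ContinuousOn (thetaSum θ x) (Set.Ioi 0) := by
  intro y hy
  have hcont : ContinuousOn (thetaSum θ x) (Set.Ioo 0 (y + 1)) := by
    refine continuousOn_tsum
      (fun k => (continuousOn_Theta_right hθ).mono fun t ht => ht.1)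
      (summable_Theta_s1 hθ hx hsum (y := y + 1) (by linarith [Set.mem_Ioi.1 hy])) fun k t ht => ?_
    rw [Real.norm_of_nonneg (Theta_nonneg_s1 hθ ht.1)]
    exact Theta_le_Theta hθ (hx k).le ht.1 le_rfl ht.2.le
  exact (hcont.continuousAt (Ioo_mem_nhds hy (lt_add_one y))).continuousWithinAt

theorem exists_mem_Icc_thetaSum_eq (hθ : θ ∈ Set.Ioo 0 π) {ι : Type*} {lo hi q : ι → ℝ}
    (hpos : ∀ k, 0 < lo k) (hle : lo ≤ hi) (hsum : Summable fun k => (lo k)⁻¹)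
    (hlo : ∀ j, thetaSum θ lo (lo j) ≤ q j) (hhi : ∀ j, q j ≤ thetaSum θ hi (hi j)) :
    ∃ p ∈ Set.Icc lo hi, ∀ j, thetaSum θ p (p j) = q j := by
  have hpos_of_mem : ∀ x ∈ Set.Icc lo hi, ∀ k, 0 < x k := fun x hx k =>
    (hpos k).trans_le (hx.1 k)
  have hsum_of_mem : ∀ x ∈ Set.Icc lo hi, Summable fun k => (x k)⁻¹ := fun x hx =>
    summable_inv_of_le hpos hsum hx.1
  exact exists_mem_Icc_forall_apply_eq_of_antitoneOn (Φ := fun _ => thetaSum θ) hle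
    (fun j y hy x hx x' _ hxx' => thetaSum_le_thetaSum hθ (hpos_of_mem x hx) (hsum_of_mem x hx)
      hxx' ((hpos j).trans_le hy.1))
    (fun j x hx => (continuousOn_thetaSum hθ (hpos_of_mem x hx) (hsum_of_mem x hx)).mono
      fun y hy => (hpos j).trans_le hy.1)
    hlo hhi

lemma thetaSum_le_add_thetaSum_nat_add (hθ : θ ∈ Set.Ioo 0 π) {x : ℕ → ℝ} (hx : ∀ k, 0 < x k)
    (hsum : Summable fun k => (x k)⁻¹) {y : ℝ} (hy : 0 < y) (C : ℕ) :
    thetaSum θ x y ≤ C * θ + thetaSum θ (fun k => x (k + C)) y := by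
  rw [thetaSum, ← (summable_Theta_s1 hθ hx hsum hy).sum_add_tsum_nat_add C, ← thetaSum]
  gcongr
  simpa using Finset.sum_le_card_nsmul (Finset.range C) _ _ fun k _ => Theta_le hθ (hx k).le hy

lemma thetaSum_self_le (hθ : θ ∈ Set.Ioo 0 π) {x : ℕ → ℝ} (hx : ∀ k, 0 < x k)
    (hsum : Summable fun k => (x k)⁻¹) (j : ℕ) :
    thetaSum θ x (x j) ≤ (j + 1 / 2) * θ + 3 * π * ∑' k, x j * (x (k + (j + 1)))⁻¹ := by
  have hsum_Theta := summable_Theta_s1 hθ hx hsum (hx j)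
  have hhead : ∑ k ∈ Finset.range j, Theta θ (x k) (x j) ≤ j * θ := by
    simpa using Finset.sum_le_card_nsmul (Finset.range j) _ _
      fun k _ => Theta_le hθ (hx k).le (hx j)
  have htail : ∑' k, Theta θ (x (k + (j + 1))) (x j) ≤
      3 * π * ∑' k, x j * (x (k + (j + 1)))⁻¹ := by
    rw [← tsum_mul_left]
    simp only [← mul_assoc]
    have hsum_tail := (summable_nat_add_iff (j + 1)).2 hsum
    exact Summable.tsum_le_tsum (fun k => Theta_le_inv hθ (hx _) (hx j))
      (summable_Theta_s1 hθ (fun k => hx _) hsum_tail (hx j)) (hsum_tail.mul_left _)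
  rw [thetaSum, ← hsum_Theta.sum_add_tsum_nat_add (j + 1), Finset.sum_range_succ,
    Theta_self hθ (hx j)]
  linarith

end ThetaSum

section PowerLaw

variable {θ α : ℝ}

lemma summable_inv_nat_succ_rpow (hα : 1 < α) :
    Summable fun k : ℕ => (((k + 1 : ℕ) : ℝ) ^ α)⁻¹ :=
  (summable_nat_add_iff 1).2 (Real.summable_nat_rpow_inv.2 hα)

lemma nat_succ_rpow_pos (k : ℕ) : 0 < ((k + 1 : ℕ) : ℝ) ^ α :=
  Real.rpow_pos_of_pos (by positivity) α

lemma Theta_rpow_rpow {s m : ℝ} (hs : 0 ≤ s) (hm : 0 < m) :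
    Theta θ (s ^ α) (m ^ α) = Theta θ ((m⁻¹ * s) ^ α) 1 := by
  rw [← Theta_mul_left (y := 1) (Real.rpow_pos_of_pos hm α), ← Real.mul_rpow hm.le (by positivity),
    mul_inv_cancel_left₀ hm.ne', mul_one]

lemma antitoneOn_Theta_rpow (hθ : θ ∈ Set.Ioo 0 π) (hα : 0 ≤ α) {y : ℝ} (hy : 0 < y) :
    AntitoneOn (fun s : ℝ => Theta θ (s ^ α) y) (Set.Ici 0) := fun _ hs _ _ hst =>
  Theta_le_Theta hθ (Real.rpow_nonneg hs α) hy (Real.rpow_le_rpow hs hst hα) le_rfl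

lemma integrableOn_Theta_rpow_rpow (hθ : θ ∈ Set.Ioo 0 π) (hα : 1 < α) {m : ℝ} (hm : 0 < m) :
    IntegrableOn (fun s : ℝ => Theta θ (s ^ α) (m ^ α)) (Set.Ioi 0) := by
  refine IntegrableOn.congr_fun ?_ (fun s hs => (Theta_rpow_rpow (le_of_lt hs) hm).symm)
    measurableSet_Ioi
  rw [integrableOn_Ioi_comp_mul_left_iff (fun s => Theta θ (s ^ α) 1) 0 (inv_pos.2 hm), mul_zero]
  exact integrableOn_Theta_rpow hθ hα

lemma integral_Theta_rpow_rpow {m : ℝ} (hm : 0 < m) :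
    ∫ s in Set.Ioi (0 : ℝ), Theta θ (s ^ α) (m ^ α) = π * Drift θ α * m := by
  rw [setIntegral_congr_fun measurableSet_Ioi fun s hs => Theta_rpow_rpow (le_of_lt hs) hm,
    integral_comp_mul_left_Ioi (fun s => Theta θ (s ^ α) 1) 0 (inv_pos.2 hm), mul_zero, inv_inv,
    smul_eq_mul, Drift]
  field_simp

lemma thetaSum_nat_succ_rpow_le (hθ : θ ∈ Set.Ioo 0 π) (hα : 1 < α) {m : ℝ} (hm : 0 < m) :
    thetaSum θ (fun k : ℕ => ((k + 1 : ℕ) : ℝ) ^ α) (m ^ α) ≤ π * Drift θ α * m := by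
  have hm' : 0 < m ^ α := Real.rpow_pos_of_pos hm α
  rw [← integral_Theta_rpow_rpow hm]
  exact (antitoneOn_Theta_rpow hθ (by linarith) hm').tsum_add_one_le_integral
    (integrableOn_Theta_rpow_rpow hθ hα hm) fun _ _ => Theta_nonneg_s1 hθ hm'

lemma le_thetaSum_nat_succ_rpow (hθ : θ ∈ Set.Ioo 0 π) (hα : 1 < α) {m : ℝ} (hm : 0 < m) :
    π * Drift θ α * m ≤ θ + thetaSum θ (fun k : ℕ => ((k + 1 : ℕ) : ℝ) ^ α) (m ^ α) := by
  have hm' : 0 < m ^ α := Real.rpow_pos_of_pos hm α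
  have hanti := antitoneOn_Theta_rpow hθ (by linarith : 0 ≤ α) hm'
  have hnonneg : ∀ s ∈ Set.Ioi (0 : ℝ), 0 ≤ Theta θ (s ^ α) (m ^ α) :=
    fun _ _ => Theta_nonneg_s1 hθ hm'
  have hsum := hanti.summable_of_integrableOn_Ioi_zero
    (integrableOn_Theta_rpow_rpow hθ hα hm) hnonneg
  calc π * Drift θ α * m ≤ ∑' k : ℕ, Theta θ ((k : ℝ) ^ α) (m ^ α) := by
        rw [← integral_Theta_rpow_rpow hm]
        exact hanti.integral_le_tsum hsum hnonneg
    _ ≤ θ + thetaSum θ (fun k : ℕ => ((k + 1 : ℕ) : ℝ) ^ α) (m ^ α) := by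
        rw [hsum.tsum_eq_zero_add, thetaSum]
        gcongr
        exact Theta_le hθ (Real.rpow_nonneg (Nat.cast_nonneg 0) α) hm'

end PowerLaw

section Barriers

variable {θ α δ : ℝ} {C : ℕ}

lemma le_thetaSum_nat_add_rpow (hθ : θ ∈ Set.Ioo 0 π) (hα : 1 < α) (C j : ℕ) :
    π * Drift θ α * (j + C + 1 : ℕ) ≤ (C + 1) * θ +
      thetaSum θ (fun k => ((k + C + 1 : ℕ) : ℝ) ^ α) (((j + C + 1 : ℕ) : ℝ) ^ α) := by
  have hsum := le_thetaSum_nat_succ_rpow hθ hα (m := (j + C + 1 : ℕ)) (by positivity)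
  have hshift := thetaSum_le_add_thetaSum_nat_add hθ nat_succ_rpow_pos
    (summable_inv_nat_succ_rpow hα) (nat_succ_rpow_pos (α := α) (j + C)) C
  linarith

/-- The power law `(k - C + 1) ^ α` for `k ≥ C`, preceded by the `C` increasing terms
`δ ^ (C - k)`, `k < C`. By truncated subtraction the first factor is `1` for `k ≥ C`
and the second one is `1` for `k < C`. -/
noncomputable def lowerBarrier (α δ : ℝ) (C k : ℕ) : ℝ :=
  δ ^ (C - k) * ((k - C + 1 : ℕ) : ℝ) ^ α

lemma lowerBarrier_pos (hδ : 0 < δ) (k : ℕ) : 0 < lowerBarrier α δ C k :=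
  mul_pos (pow_pos hδ _) (nat_succ_rpow_pos _)

lemma lowerBarrier_of_le {k : ℕ} (hk : C ≤ k) :
    lowerBarrier α δ C k = ((k - C + 1 : ℕ) : ℝ) ^ α := by
  rw [lowerBarrier, Nat.sub_eq_zero_of_le hk, pow_zero, one_mul]

lemma lowerBarrier_nat_add (k : ℕ) : lowerBarrier α δ C (k + C) = ((k + 1 : ℕ) : ℝ) ^ α := by
  rw [lowerBarrier_of_le (Nat.le_add_left C k), Nat.add_sub_cancel]

lemma lowerBarrier_le (hδ : δ ∈ Set.Ioo 0 1) (hα : 0 ≤ α) (k : ℕ) :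
    lowerBarrier α δ C k ≤ ((k + C + 1 : ℕ) : ℝ) ^ α :=
  calc lowerBarrier α δ C k ≤ ((k - C + 1 : ℕ) : ℝ) ^ α :=
        mul_le_of_le_one_left (nat_succ_rpow_pos _).le (pow_le_one₀ hδ.1.le hδ.2.le)
    _ ≤ ((k + C + 1 : ℕ) : ℝ) ^ α := by
        gcongr
        omega

lemma summable_inv_lowerBarrier (hα : 1 < α) :
    Summable fun k => (lowerBarrier α δ C k)⁻¹ := by
  rw [← summable_nat_add_iff C]
  simpa only [lowerBarrier_nat_add] using summable_inv_nat_succ_rpow hα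

lemma thetaSum_lowerBarrier_nat_add_le (hθ : θ ∈ Set.Ioo 0 π) (hα : 1 < α) (hδ : 0 < δ) (i : ℕ) :
    thetaSum θ (lowerBarrier α δ C) (lowerBarrier α δ C (i + C)) ≤
      C * θ + π * Drift θ α * (i + 1 : ℕ) := by
  refine (thetaSum_le_add_thetaSum_nat_add hθ (lowerBarrier_pos hδ) (summable_inv_lowerBarrier hα)
    (lowerBarrier_pos hδ _) C).trans ?_
  simp only [lowerBarrier_nat_add]
  exact add_le_add_right (thetaSum_nat_succ_rpow_le hθ hα (by positivity)) _

lemma lowerBarrier_mul_inv_le (hδ : δ ∈ Set.Ioo 0 1) {j k : ℕ} (hjC : j < C) (hjk : j < k) :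
    lowerBarrier α δ C j * (lowerBarrier α δ C k)⁻¹ ≤ δ * (((k - C + 1 : ℕ) : ℝ) ^ α)⁻¹ := by
  have hpow : δ ^ (C - j) ≤ δ * δ ^ (C - k) := by
    rw [← pow_succ']
    exact pow_le_pow_of_le_one hδ.1.le hδ.2.le (by omega)
  have hj : lowerBarrier α δ C j = δ ^ (C - j) := by
    simp [lowerBarrier, Nat.sub_eq_zero_of_le hjC.le]
  have hδk : 0 < δ ^ (C - k) := pow_pos hδ.1 _
  rw [hj, lowerBarrier, mul_inv, ← mul_assoc]
  refine mul_le_mul_of_nonneg_right ?_ (inv_nonneg.2 (nat_succ_rpow_pos _).le)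
  rwa [← div_eq_mul_inv, div_le_iff₀ hδk]

lemma thetaSum_lowerBarrier_le (hθ : θ ∈ Set.Ioo 0 π) (hα : 1 < α) (hδ : δ ∈ Set.Ioo 0 1) {j : ℕ}
    (hj : j < C) :
    thetaSum θ (lowerBarrier α δ C) (lowerBarrier α δ C j) ≤
      (j + 1 / 2) * θ + 3 * π * (δ * ∑' k : ℕ, (((k - C + 1 : ℕ) : ℝ) ^ α)⁻¹) := by
  have hsum : Summable fun k : ℕ => (((k - C + 1 : ℕ) : ℝ) ^ α)⁻¹ :=
    (summable_nat_add_iff C).1 (by simpa using summable_inv_nat_succ_rpow hα)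
  have hsum_lo := summable_inv_lowerBarrier (δ := δ) (C := C) hα
  refine (thetaSum_self_le hθ (lowerBarrier_pos hδ.1) hsum_lo j).trans ?_
  gcongr
  calc ∑' k, lowerBarrier α δ C j * (lowerBarrier α δ C (k + (j + 1)))⁻¹
      ≤ ∑' k, δ * (((k + (j + 1) - C + 1 : ℕ) : ℝ) ^ α)⁻¹ :=
        Summable.tsum_le_tsum (fun k => lowerBarrier_mul_inv_le hδ hj (by omega))
          (((summable_nat_add_iff (j + 1)).2 hsum_lo).mul_left _)
          (((summable_nat_add_iff (j + 1)).2 hsum).mul_left _)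
    _ ≤ δ * ∑' k : ℕ, (((k - C + 1 : ℕ) : ℝ) ^ α)⁻¹ := by
        rw [tsum_mul_left]
        refine mul_le_mul_of_nonneg_left ?_ hδ.1.le
        rw [← hsum.sum_add_tsum_nat_add (j + 1)]
        exact le_add_of_nonneg_left (Finset.sum_nonneg fun k _ => by positivity)

lemma exists_thetaSum_lowerBarrier_le (hθ : θ ∈ Set.Ioo 0 π) (hα : 1 < α) {q : ℕ → ℝ}
    (hq : ∀ j, (j + 1 / 2) * θ < q j) (C : ℕ) :
    ∃ δ ∈ Set.Ioo (0 : ℝ) 1, ∀ j < C,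
      thetaSum θ (lowerBarrier α δ C) (lowerBarrier α δ C j) ≤ q j := by
  set M := ∑' k : ℕ, (((k - C + 1 : ℕ) : ℝ) ^ α)⁻¹
  have hsmall : ∀ᶠ δ in 𝓝[>] (0 : ℝ), ∀ j ∈ Finset.range C,
      (j + 1 / 2) * θ + 3 * π * (δ * M) < q j := by
    refine (Filter.eventually_all_finset _).2 fun j _ => ?_
    have hcont : Continuous fun δ : ℝ => (j + 1 / 2) * θ + 3 * π * (δ * M) := by fun_prop
    exact nhdsWithin_le_nhds
      (hcont.continuousAt.eventually_lt continuousAt_const (by simpa using hq j))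
  obtain ⟨δ, hδ_small, hδ⟩ := (hsmall.and (Ioo_mem_nhdsGT one_pos)).exists
  exact ⟨δ, hδ, fun j hj => (thetaSum_lowerBarrier_le hθ hα hδ hj).trans
    (hδ_small j (Finset.mem_range.2 hj)).le⟩

theorem exists_hasSum_Theta_of_Drift_eq_one (hθ : θ ∈ Set.Ioo 0 π) (hα : 1 < α)
    (hdrift : Drift θ α = 1) {q : ℕ → ℝ} {B : ℝ} (hqB : ∀ j : ℕ, |q j - π * (j + 1 : ℕ)| ≤ B)
    (hq : ∀ j, (j + 1 / 2) * θ < q j) :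
    ∃ (C : ℕ) (p : ℕ → ℝ), (∀ k, 0 < p k) ∧
      (∀ k, C ≤ k → ((k - C + 1 : ℕ) : ℝ) ^ α ≤ p k) ∧
      (∀ k, p k ≤ ((k + C + 1 : ℕ) : ℝ) ^ α) ∧
      ∀ j, HasSum (fun k => Theta θ (p k) (p j)) (q j) := by
  obtain ⟨C, hC⟩ := exists_nat_ge ((θ + B) / (π - θ))
  rw [div_le_iff₀ (sub_pos.2 hθ.2)] at hC
  obtain ⟨δ, hδ, hsmall⟩ := exists_thetaSum_lowerBarrier_le hθ hα hq C
  have hlo : ∀ j, thetaSum θ (lowerBarrier α δ C) (lowerBarrier α δ C j) ≤ q j := by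
    intro j
    obtain hj | hj := lt_or_ge j C
    · exact hsmall j hj
    · obtain ⟨i, rfl⟩ := Nat.exists_eq_add_of_le' hj
      have hupper := thetaSum_lowerBarrier_nat_add_le (C := C) hθ hα hδ.1 i
      have hqi := (abs_le.1 (hqB (i + C))).1
      rw [hdrift] at hupper
      push_cast at hupper hqi
      linarith [hθ.1]
  have hhi : ∀ j, q j ≤ thetaSum θ (fun k => ((k + C + 1 : ℕ) : ℝ) ^ α)
      (((j + C + 1 : ℕ) : ℝ) ^ α) := by
    intro j
    have hlower := le_thetaSum_nat_add_rpow hθ hα C j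
    have hqj := (abs_le.1 (hqB j)).2
    rw [hdrift] at hlower
    push_cast at hlower hqj ⊢
    linarith
  obtain ⟨p, hp, hpq⟩ := exists_mem_Icc_thetaSum_eq hθ (lowerBarrier_pos hδ.1)
    (lowerBarrier_le hδ (by linarith)) (summable_inv_lowerBarrier hα) hlo hhi
  have hpos : ∀ k, 0 < p k := fun k => (lowerBarrier_pos hδ.1 k).trans_le (hp.1 k)
  refine ⟨C, p, hpos, fun k hk => (lowerBarrier_of_le hk).symm.trans_le (hp.1 k), hp.2,
    fun j => hpq j ▸ (summable_Theta_s1 hθ hpos ?_ (hpos j)).hasSum⟩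
  exact summable_inv_of_le (lowerBarrier_pos hδ.1) (summable_inv_lowerBarrier hα) hp.1

end Barriers

section Asymptotics

lemma isBigO_add_rpow_sub_rpow (c α : ℝ) :
    (fun x : ℝ => (x + c) ^ α - x ^ α) =O[atTop] fun x => x ^ (α - 1) := by
  have hdiv : Tendsto (fun x : ℝ => 1 + c / x) atTop (𝓝 1) := by
    simpa using (tendsto_const_nhds (x := (1 : ℝ))).add
      (tendsto_const_nhds (x := c).div_atTop tendsto_id)
  have hderiv : (fun x : ℝ => (1 + c / x) ^ α - 1) =O[atTop] fun x => c / x := by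
    simpa [Function.comp_def] using
      (Real.hasDerivAt_rpow_const (p := α) (.inl one_ne_zero)).isBigO_sub.comp_tendsto hdiv
  have hmul := (isBigO_refl (fun x : ℝ => x ^ α) atTop).mul
    (hderiv.trans (isBigO_const_mul_self c (fun x : ℝ => x⁻¹) atTop))
  refine hmul.congr' ?_ ?_
  · filter_upwards [eventually_gt_atTop 0, hdiv.eventually_const_lt one_pos] with x hx hx'
    have hfactor : x + c = x * (1 + c / x) := by field_simp
    rw [hfactor, Real.mul_rpow hx.le hx'.le]
    ring
  · filter_upwards [eventually_gt_atTop 0] with x hx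
    rw [Real.rpow_sub_one hx.ne', div_eq_mul_inv]

lemma isBigO_sub_rpow_of_le_of_le {u : ℕ → ℝ} {α a b : ℝ}
    (hlo : ∀ᶠ k : ℕ in atTop, ((k : ℝ) + a) ^ α ≤ u k)
    (hhi : ∀ᶠ k : ℕ in atTop, u k ≤ ((k : ℝ) + b) ^ α) :
    (fun k : ℕ => u k - (k : ℝ) ^ α) =O[atTop] fun k : ℕ => (k : ℝ) ^ (α - 1) := by
  have hshift (c : ℝ) := (isBigO_add_rpow_sub_rpow c α).comp_tendsto tendsto_natCast_atTop_atTop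
  refine IsBigO.trans (.of_norm_eventuallyLE ?_) ((hshift a).norm_left.add (hshift b).norm_left)
  filter_upwards [hlo, hhi] with k hk hk'
  simp only [Function.comp_apply, Real.norm_eq_abs]
  rw [abs_le]
  constructor <;> linarith [neg_abs_le (((k : ℝ) + a) ^ α - (k : ℝ) ^ α),
    le_abs_self (((k : ℝ) + b) ^ α - (k : ℝ) ^ α), abs_nonneg (((k : ℝ) + a) ^ α - (k : ℝ) ^ α),
    abs_nonneg (((k : ℝ) + b) ^ α - (k : ℝ) ^ α)]

end Asymptotics

lemma phi_eq_ofReal_of_hasSum {θ q : ℝ} {X Y : ℕ → ℝ} {j : ℕ} (hθ : θ ∈ Set.Ioo 0 π)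
    (hY : 0 < Y j) (h : HasSum (fun k => Theta θ (X (k + 1)) (Y j)) (π * q)) :
    phi θ X Y j = ENNReal.ofReal q := by
  rw [phi, ← ENNReal.ofReal_tsum_of_nonneg (fun _ => Theta_nonneg_s1 hθ hY) h.summable, h.tsum_eq,
    ← ENNReal.ofReal_mul (by positivity), one_div, inv_mul_cancel_left₀ Real.pi_ne_zero]

theorem stmt_1 (θ : ℝ) (hθ : 0 < θ) (hθπ : θ < Real.pi)
    (Q : ℕ → ℝ) (hQpos : ∀ k, 1 ≤ k → 0 < Q k)
    (hQ : (fun k : ℕ => Q k - (k : ℝ)) =O[atTop] fun _ : ℕ => (1 : ℝ))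
    (hQ' : ∀ k : ℕ, 1 ≤ k → ((k : ℝ) - 1 / 2) * θ / Real.pi < Q k) :
    ∃ P : ℕ → ℝ, (∀ k, 1 ≤ k → 0 < P k) ∧
      (∀ j, 1 ≤ j → phi θ P P j = ENNReal.ofReal (Q j)) ∧
      (fun k : ℕ => P k - (k : ℝ) ^ (1 + θ / Real.pi)) =O[atTop]
        fun k : ℕ => (k : ℝ) ^ (1 + θ / Real.pi - 1) := by
  have hα : 1 < 1 + θ / π := lt_add_of_pos_right 1 (div_pos hθ Real.pi_pos)
  obtain ⟨B, hB⟩ := isBigO_one_nat_atTop_iff.1 hQ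
  have hbounded : ∀ j : ℕ, |π * Q (j + 1) - π * (j + 1 : ℕ)| ≤ π * B := fun j => by
    rw [← mul_sub, abs_mul, abs_of_pos Real.pi_pos]
    exact mul_le_mul_of_nonneg_left (hB (j + 1)) Real.pi_pos.le
  have hlower : ∀ j : ℕ, (j + 1 / 2) * θ < π * Q (j + 1) := fun j => by
    have h := (div_lt_iff₀' Real.pi_pos).1 (hQ' (j + 1) (Nat.le_add_left 1 j))
    push_cast at h
    linarith
  obtain ⟨C, p, hpos, hlo, hhi, hsum⟩ := exists_hasSum_Theta_of_Drift_eq_one ⟨hθ, hθπ⟩ hα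
    (Drift_one_add_div_pi ⟨hθ, hθπ⟩) hbounded hlower
  refine ⟨fun k => p (k - 1), fun k _ => hpos _, fun j hj => ?_,
    isBigO_sub_rpow_of_le_of_le (a := -C) (b := C) ?_ ?_⟩
  · obtain ⟨i, rfl⟩ := Nat.exists_eq_add_of_le' hj
    exact phi_eq_ofReal_of_hasSum ⟨hθ, hθπ⟩ (hpos _) (hsum i)
  · filter_upwards [eventually_gt_atTop C] with k hk
    convert hlo (k - 1) (by omega) using 2
    rw [show k - 1 - C + 1 = k - C by omega, Nat.cast_sub hk.le, sub_eq_add_neg]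
  · filter_upwards [eventually_ge_atTop 1] with k hk
    convert hhi (k - 1) using 2
    rw [show k - 1 + C + 1 = k + C by omega, Nat.cast_add]
end
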